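/- arXiv:1909.05579 — 2 statements merged into one kernel-verified Lean document; each statement's English description precedes it below -/
import Mathlib

section
/- Let c_0, …, c_19 be indeterminates over ℂ, let F be the generic quaternary cubic form with coefficients c_0, …, c_19, let M be its Nanson matrix with entries in R = ℂ[c_0, …, c_19], and for k ≥ 1 let I_k ⊂ R be the ideal generated by all (20−k+1)×(20−k+1) minors of M. Then the zero locus V_2 of I_2 has codimension exactly 2 in P^19 (equivalently, the affine cone V(I_2) ⊆ ℂ^20 has Krull dimension 18), and for every k ≥ 3 the zero locus V_k of I_k has codimension at least 3 in P^19 (equivalently, the affine cone V(I_k) has Krull dimension at most 17). -/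
/-!
The dimension of the zero locus of an ideal `I` is measured by its points over extension fields of
`ℂ`: the quotient by `I` has Krull dimension at least `r` exactly when some such point has at least
`r` algebraically independent coordinates (`le_ringKrullDim_quotient_of_point`,
`ringKrullDim_quotient_le_of_points`).

The rows of the Nanson matrix of `F` span the space generated by the cubics `xⱼ ∂ᵢF` and by the
partial derivatives of the Hessian determinant of `F`. This space is compatible with linear
substitutions, so the rank of the matrix is a `GL₄`-invariant of `F` (`rank_nan_linSub_le`), and the
permutations of the variables and the diagonal one-parameter groups act on each `Vₖ`.

*Upper bounds.* `HasPoint I Z N r` says that `I` has a point with coordinates `0` on `Z`, `1` on `N`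
and `r` algebraically independent coordinates. If a one-parameter group fixes the coordinates in `N`
and has positive weights on the others that are not in `Z`, then the locus is a cone for it, and
Krull's principal ideal theorem allows one to make a further coordinate vanish while lowering `r` by
one (`HasPoint.slice`). On the other hand a given coordinate either vanishes or can be normalised to
`1` by a one-parameter group fixing the coordinates in `N`, again lowering `r` by at most one
(`HasPoint.normalise`). When `r` is as large as the number of unconstrained coordinates, the
point is generic, so that every cubic with the prescribed coordinates lies on `Vₖ`. Starting from a
component of too large a dimension and alternating these steps, with the leading terms `x₀²x₃`,
`x₀x₂²`, `x₁³` normalised in turn, one reaches one of the cubics `cubicA`, …, `cubicD`. For these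
the kernel of the Nanson matrix is computed by hand, and it is too small.

*Lower bound.* A cubic `x₀ q(x₂, x₃) + c(x₁, x₂, x₃)` is singular at `(1:0:0:0)` with a degenerate
tangent cone. All `xⱼ ∂ᵢF` and all derivatives of the Hessian lack the monomials `x₀³`, `x₀²x₁`, so
two columns of the Nanson matrix vanish and its rank is at most `18` (`rank_cuspCubic`). Moving the
singular point and the singular line of the tangent cone gives a family with `18` parameters
(`cuspVec`), which is generically finite onto its image by the Jacobian criterion at
`x₀x₂x₃ + x₁³` (`trGe_cuspVec`).
-/

open MvPolynomial

/-- The exponent vectors of the 20 degree-3 monomials in `x₀, x₁, x₂, x₃`, in a fixed order. -/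
noncomputable def cubicExp : Fin 20 → (Fin 4 →₀ ℕ) := fun m =>
  Finsupp.equivFunOnFinite.symm
    (![![3,0,0,0], ![2,1,0,0], ![2,0,1,0], ![2,0,0,1],
       ![1,2,0,0], ![1,1,1,0], ![1,1,0,1], ![1,0,2,0], ![1,0,1,1], ![1,0,0,2],
       ![0,3,0,0], ![0,2,1,0], ![0,2,0,1], ![0,1,2,0], ![0,1,1,1], ![0,1,0,2],
       ![0,0,3,0], ![0,0,2,1], ![0,0,1,2], ![0,0,0,3]] m)

/-- The twenty cubic forms of Nanson's construction: the sixteen products `xⱼ · Qᵢ`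
and the four partial derivatives of the Jacobian determinant of `Q₁, …, Q₄`. -/
noncomputable def nansonRow {K : Type*} [CommRing K]
    (Q : Fin 4 → MvPolynomial (Fin 4) K) : Fin 20 → MvPolynomial (Fin 4) K := fun r =>
  if h : (r : ℕ) < 16 then
    X (⟨(r : ℕ) % 4, by omega⟩ : Fin 4) * Q ⟨(r : ℕ) / 4, by omega⟩
  else
    pderiv (⟨(r : ℕ) - 16, by omega⟩ : Fin 4)
      (Matrix.det (Matrix.of fun i j : Fin 4 => pderiv j (Q i)))

/-- Nanson's 20 × 20 matrix of four quaternary quadrics: the coefficient matrix of the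
twenty cubics `nansonRow Q` with respect to the twenty degree-3 monomials. -/
noncomputable def nansonMatrix {K : Type*} [CommRing K]
    (Q : Fin 4 → MvPolynomial (Fin 4) K) : Matrix (Fin 20) (Fin 20) K :=
  Matrix.of fun r c => coeff (cubicExp c) (nansonRow Q r)

/-- The generic quaternary cubic form, with the 20 indeterminates `c₀, …, c₁₉` as
coefficients. -/
noncomputable def genericCubic : MvPolynomial (Fin 4) (MvPolynomial (Fin 20) ℂ) :=
  ∑ m : Fin 20, monomial (cubicExp m) (X m : MvPolynomial (Fin 20) ℂ)

/-- The Nanson matrix of the generic quaternary cubic form; its entries are polynomials in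
the 20 generic coefficients. -/
noncomputable def genericNansonMatrix :
    Matrix (Fin 20) (Fin 20) (MvPolynomial (Fin 20) ℂ) :=
  nansonMatrix fun i => pderiv i genericCubic

/-- The ideal `Iₖ` generated by all `(20-k+1) × (20-k+1)` minors of the Nanson matrix of
the generic quaternary cubic. -/
noncomputable def nansonMinorsIdeal (k : ℕ) : Ideal (MvPolynomial (Fin 20) ℂ) :=
  Ideal.span (Set.range fun rc : (Fin (20 - k + 1) → Fin 20) × (Fin (20 - k + 1) → Fin 20) =>
    (genericNansonMatrix.submatrix rc.1 rc.2).det)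

/-! ### Transcendence degree of points -/

/-- `TrGe g r` : among the coordinates of `g` there are `r` that are algebraically independent
over `ℂ`; equivalently `ℂ[g]` has transcendence degree at least `r`. -/
def TrGe {K : Type*} [CommRing K] [Algebra ℂ K] {ι : Type*} (g : ι → K) (r : ℕ) : Prop :=
  ∃ s : Fin r → ι, AlgebraicIndependent ℂ (g ∘ s)

theorem TrGe.mono {K : Type*} [CommRing K] [Algebra ℂ K] {ι : Type*} {g : ι → K} {r r' : ℕ}
    (h : TrGe g r) (hr : r' ≤ r) : TrGe g r' := by
  obtain ⟨s, hs⟩ := h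
  exact ⟨s ∘ Fin.castLE hr, hs.comp _ (Fin.castLE_injective hr)⟩

/-- Transcendence degree can only grow when lifting along an algebra homomorphism. -/
theorem TrGe.of_map {K L : Type*} [CommRing K] [Algebra ℂ K] [CommRing L] [Algebra ℂ L]
    {ι : Type*} {g : ι → K} {r : ℕ} (f : K →ₐ[ℂ] L) (h : TrGe (fun i => f (g i)) r) :
    TrGe g r := by
  obtain ⟨s, hs⟩ := h
  refine ⟨s, AlgebraicIndependent.of_comp f ?_⟩
  exact hs

theorem TrGe.map {K L : Type*} [CommRing K] [Algebra ℂ K] [CommRing L] [Algebra ℂ L]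
    {ι : Type*} {g : ι → K} {r : ℕ} (f : K →ₐ[ℂ] L) (hf : Function.Injective f)
    (h : TrGe g r) : TrGe (fun i => f (g i)) r := by
  obtain ⟨s, hs⟩ := h
  exact ⟨s, hs.map' hf⟩

/-- If `r` independent elements are algebraic over `ℂ[g, T]`, then `g` contains at least
`r - |T|` independent elements. -/
theorem TrGe.of_isAlgebraic {K : Type*} [Field K] [Algebra ℂ K] {ι : Type*} (g : ι → K) {r r' t : ℕ}
    {κ : Type*} (y : κ → K) (hy : TrGe y r) (T : Set K) (hT : T.encard ≤ t)
    (hr : r' + t ≤ r)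
    (halg : ∀ j, IsAlgebraic (Algebra.adjoin ℂ (Set.range g ∪ T)) (y j)) : TrGe g r' := by
  obtain ⟨s, hs⟩ := hy
  set M := AlgebraicIndependent.matroid ℂ K
  have h1 : (r : ℕ∞) ≤ M.eRk (Set.range g ∪ T) := by
    rw [← M.eRk_closure_eq, AlgebraicIndependent.matroid_closure_eq]
    have hind : M.Indep (Set.range (y ∘ s)) := by
      rw [AlgebraicIndependent.matroid_indep_iff]
      exact hs.coe_range
    have hc : (Set.range (y ∘ s)).encard = r := by
      rw [← Set.image_univ, hs.injective.injOn.encard_image]; simp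
    rw [← hc]
    refine hind.encard_le_eRk_of_subset ?_
    rintro _ ⟨j, rfl⟩
    exact halg (s j)
  have h2 : (r' : ℕ∞) ≤ M.eRk (Set.range g) := by
    have h3 := (M.eRk_union_le_eRk_add_encard (Set.range g) T)
    have h4 : (r : ℕ∞) ≤ M.eRk (Set.range g) + t := h1.trans (h3.trans (by gcongr))
    have h5 : ((r' + t : ℕ) : ℕ∞) ≤ M.eRk (Set.range g) + t := le_trans (by exact_mod_cast hr) h4
    push_cast at h5
    exact (ENat.add_le_add_iff_right (by simp)).mp h5
  obtain ⟨I, hI, hind, hcard⟩ := Matroid.le_eRk_iff.mp h2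
  have hfin : I.Finite := Set.finite_of_encard_eq_coe hcard
  have hn : I.ncard = r' := by rw [Set.ncard, hcard]; rfl
  have hcard' : Nat.card I = r' := hn
  have := hfin.to_subtype
  let e : Fin r' ≃ I := (Finite.equivFinOfCardEq hcard').symm
  choose p hp using fun i : I => hI i.2
  refine ⟨p ∘ e, ?_⟩
  have : g ∘ (p ∘ e) = (fun i : I => (i : K)) ∘ e := by
    funext i; simp [hp]
  rw [this]
  exact (AlgebraicIndependent.matroid_indep_iff.mp hind).comp e e.injective

/-! ### A form of Krull's principal ideal theorem -/

/-- If `f` divides `b` in a finite extension of an integrally closed domain containing `b`, then the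
constant coefficient of the minimal polynomial of `f` divides a power of `b`: up to sign, a power of
that coefficient is the norm of `f`, and the norm of `b` is a power of `b`. -/
theorem minpoly_coeff_zero_dvd_pow {B D : Type*} [CommRing B] [IsDomain B] [IsIntegrallyClosed B]
    [CommRing D] [IsDomain D] [Algebra B D] [FaithfulSMul B D] [Module.Finite B D]
    (f h : D) (b : B) (hb : algebraMap B D b = f * h) :
    ∃ n : ℕ, (minpoly B f).coeff 0 ∣ b ^ n := by
  let K := FractionRing B
  let L := FractionRing D
  let : Algebra K L := FractionRing.liftAlgebra B L
  have hLint : Algebra.IsIntegral B D := inferInstance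
  have : FiniteDimensional K L := by infer_instance
  let f' : L := algebraMap D L f
  let h' : L := algebraMap D L h
  have hf : IsIntegral B f := Algebra.IsIntegral.isIntegral f
  have hf' : IsIntegral K f' := Algebra.IsIntegral.isIntegral f'
  obtain ⟨ν, hν⟩ : ∃ ν : B, algebraMap B K ν = Algebra.norm K h' := by
    have hi : IsIntegral B (Algebra.norm K h') :=
      Algebra.isIntegral_norm K ((Algebra.IsIntegral.isIntegral (R := B) h).algebraMap)
    exact IsIntegrallyClosed.isIntegral_iff.mp hi
  have h1 : Algebra.norm K (algebraMap K L (algebraMap B K b)) =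
      Algebra.norm K f' * Algebra.norm K h' := by
    rw [← map_mul, ← IsScalarTower.algebraMap_apply, IsScalarTower.algebraMap_apply B D L, hb,
      map_mul]
  rw [Algebra.norm_algebraMap, Algebra.norm_eq_norm_adjoin K f', ← hν] at h1
  have h2 : Algebra.norm K (IntermediateField.AdjoinSimple.gen K f') =
      (-1) ^ (minpoly K f').natDegree * algebraMap B K ((minpoly B f).coeff 0) := by
    have := Algebra.PowerBasis.norm_gen_eq_coeff_zero_minpoly
      (IntermediateField.adjoin.powerBasis hf')
    rw [IntermediateField.adjoin.powerBasis_gen, IntermediateField.minpoly_gen,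
      IntermediateField.adjoin.powerBasis_dim] at this
    rw [this, minpoly.isIntegrallyClosed_eq_field_fractions K L hf, Polynomial.coeff_map]
  rw [h2] at h1
  have hm : Module.finrank (IntermediateField.adjoin K {f'}) L ≠ 0 := Module.finrank_pos.ne'
  refine ⟨Module.finrank K L, ?_⟩
  have h3 : algebraMap B K (b ^ Module.finrank K L) = algebraMap B K
      (((-1) ^ (minpoly K f').natDegree * ((minpoly B f).coeff 0)) ^
        (Module.finrank (IntermediateField.adjoin K {f'}) L) * ν) := by
    rw [map_pow, h1]; simp
  rw [IsFractionRing.injective B K h3]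
  exact Dvd.dvd.mul_right ((dvd_mul_left _ _).trans (dvd_pow_self _ hm)) _

/-- If the kernel of `q` consists of multiples of an irreducible polynomial `π`, then `q` keeps all
but one of the variables algebraically independent: leave out one that occurs in `π`. -/
theorem indep_quotient_of_irreducible {r : ℕ} (π : MvPolynomial (Fin r) ℂ) (hπ : Irreducible π)
    {A : Type*} [CommRing A] [Algebra ℂ A] (q : MvPolynomial (Fin r) ℂ →ₐ[ℂ] A)
    (hq : ∀ b, q b = 0 → π ∣ b) : TrGe (fun i => q (X i)) (r - 1) := by
  have hvars : π.vars.Nonempty := by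
    rw [Finset.nonempty_iff_ne_empty]
    intro h
    obtain ⟨c, hc⟩ : ∃ c, π = C c := ⟨_, (vars_eq_empty_iff_eq_C).mp h⟩
    have : c ≠ 0 := by rintro rfl; exact hπ.ne_zero (by simpa using hc)
    exact hπ.not_isUnit (hc ▸ (IsUnit.mk0 c this).map C)
  obtain ⟨i, hi⟩ := hvars
  obtain ⟨r, rfl⟩ : ∃ m, r = m + 1 := ⟨r - 1, by have := i.2; omega⟩
  refine ⟨i.succAbove, ?_⟩
  rw [algebraicIndependent_iff]
  intro p hp
  have h1 : q (rename i.succAbove p) = 0 := by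
    rw [← hp]
    conv_lhs => rw [aeval_unique q, aeval_rename]
    rfl
  have h2 := hq _ h1
  by_contra hne
  have hne' : rename i.succAbove p ≠ 0 := by
    intro h; exact hne ((rename_injective _ Fin.succAbove_right_injective) (by simpa using h))
  obtain ⟨s, hs⟩ := h2
  have hd : degreeOf i (rename i.succAbove p) = 0 := by
    by_contra h
    have := vars_rename i.succAbove p (mem_vars_iff_degreeOf_ne_zero.mpr h)
    simp at this
  have hs0 : s ≠ 0 := by rintro rfl; simp [hs] at hne'
  rw [hs, degreeOf_mul_eq hπ.ne_zero hs0] at hd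
  have : degreeOf i π ≠ 0 := mem_vars_iff_degreeOf_ne_zero.mp hi
  omega

/-- If the `Gᵢ` lie in a domain that is integral over the polynomial ring `ℂ[y₁, …, yₛ]`, then at
most `s` of them are algebraically independent. -/
theorem TrGe.le_of_integral {n r s : ℕ} {D : Type*} [CommRing D] [IsDomain D] [Algebra ℂ D]
    (G : Fin n → D) (hG : TrGe G r) (φ : MvPolynomial (Fin s) ℂ →ₐ[ℂ] D)
    (hinteg : φ.IsIntegral) : r ≤ s := by
  let L := FractionRing D
  let ι : D →ₐ[ℂ] L := IsScalarTower.toAlgHom ℂ D L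
  have hι : Function.Injective ι := IsFractionRing.injective D L
  have h : TrGe (fun i => ι (φ (X i))) r := by
    refine TrGe.of_isAlgebraic (t := 0) _ _ (hG.map ι hι) ∅ (by simp) (by omega) fun j => ?_
    rw [Set.union_empty]
    have h1 : (ι.comp φ).toRingHom.IsIntegralElem (ι (G j)) := by
      obtain ⟨p, hp, hp0⟩ := hinteg (G j)
      refine ⟨p, hp, ?_⟩
      have := congrArg ι hp0
      rw [map_zero] at this
      rw [← this]
      exact (Polynomial.hom_eval₂ p φ.toRingHom ι.toRingHom (G j)).symm
    have h2 : ((ι.comp φ).range) = Algebra.adjoin ℂ (Set.range fun i => ι (φ (X i))) := by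
      rw [aeval_unique (ι.comp φ), Algebra.adjoin_range_eq_range_aeval]; rfl
    rw [← h2]
    refine IsIntegral.isAlgebraic ?_
    obtain ⟨p, hp, hp0⟩ := h1
    refine ⟨p.map (ι.comp φ).rangeRestrict.toRingHom, hp.map _, ?_⟩
    rw [Polynomial.eval₂_map]
    exact hp0
  obtain ⟨t, ht⟩ := h
  have : Function.Injective t := fun a b hab => ht.injective (by simp [hab])
  simpa using Fintype.card_le_of_injective t this

/-- A form of Krull's principal ideal theorem: cutting the closure of a point by the vanishing of a
coordinate that is not invertible lowers the transcendence degree by at most one. -/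
theorem exists_specialization {n r : ℕ} {A : Type} [CommRing A] [IsDomain A] [Algebra ℂ A]
    (G : Fin n → A) (hG : TrGe G r) (a : Fin n) {E : Type} [CommRing E] [Nontrivial E]
    [Algebra ℂ E] (ε : A →ₐ[ℂ] E) (hε : ε (G a) = 0) :
    ∃ (K : Type) (_ : Field K) (_ : Algebra ℂ K) (g : Fin n → K),
      (∀ p : MvPolynomial (Fin n) ℂ, aeval G p = 0 → aeval g p = 0) ∧ g a = 0 ∧
        TrGe g (r - 1) := by
  let D := (aeval G : MvPolynomial (Fin n) ℂ →ₐ[ℂ] A).range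
  let π₀ : MvPolynomial (Fin n) ℂ →ₐ[ℂ] D := (aeval G).rangeRestrict
  have hπ₀ : Function.Surjective π₀ := AlgHom.rangeRestrict_surjective _
  have hker : ∀ p, aeval G p = 0 → π₀ p = 0 := fun p hp => Subtype.ext hp
  have : Algebra.FiniteType ℂ D := Algebra.FiniteType.of_surjective π₀ hπ₀
  let f : D := π₀ (X a)
  have hfG : (f : A) = G a := by simp [f, π₀]
  have hG' : TrGe (fun i => π₀ (X i)) r := by
    refine TrGe.of_map D.val ?_
    simpa [π₀] using hG
  by_cases hf0 : f = 0
  · let ι : D →ₐ[ℂ] FractionRing D := IsScalarTower.toAlgHom ℂ D _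
    have hι : Function.Injective ι := IsFractionRing.injective D _
    refine ⟨FractionRing D, inferInstance, inferInstance, fun i => ι (π₀ (X i)), ?_, ?_, ?_⟩
    · intro p hp
      have : aeval (fun i => ι (π₀ (X i))) p = (ι.comp π₀) p := by
        rw [aeval_unique (ι.comp π₀)]; rfl
      rw [this, AlgHom.comp_apply, hker p hp, map_zero]
    · change ι f = 0
      rw [hf0, map_zero]
    · exact (hG'.map ι hι).mono (by omega)
  have hfu : ¬ IsUnit f := by
    intro h
    have h1 : IsUnit ((ε.comp D.val) f) := h.map _
    have h2 : (ε.comp D.val) f = 0 := by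
      rw [AlgHom.comp_apply, Subalgebra.val_apply, hfG, hε]
    rw [h2] at h1
    exact not_isUnit_zero h1
  -- Noether normalisation: `D` is finite over `B = ℂ[y₁, …, yₛ]`, and `f` divides the constant
  -- coefficient `a₀` of its minimal polynomial over `B`.
  obtain ⟨s, φ, hφ, hfin⟩ := exists_finite_inj_algHom_of_fg ℂ D
  have hrs : r ≤ s := TrGe.le_of_integral _ hG' φ hfin.to_isIntegral
  algebraize [φ.toRingHom]
  have halg : ∀ b, algebraMap (MvPolynomial (Fin s) ℂ) D b = φ b := fun _ => rfl
  have hMF : Module.Finite (MvPolynomial (Fin s) ℂ) D := hfin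
  have hFS : FaithfulSMul (MvPolynomial (Fin s) ℂ) D :=
    (faithfulSMul_iff_algebraMap_injective _ _).mpr hφ
  have hfi : IsIntegral (MvPolynomial (Fin s) ℂ) f := Algebra.IsIntegral.isIntegral f
  set a₀ := (minpoly (MvPolynomial (Fin s) ℂ) f).coeff 0 with ha₀
  have ha0 : a₀ ≠ 0 := by
    intro h
    obtain ⟨u, hu⟩ := Polynomial.X_dvd_iff.mpr h
    have h1 := minpoly.aeval (MvPolynomial (Fin s) ℂ) f
    rcases (minpoly.prime_of_isIntegrallyClosed hfi).irreducible.isUnit_or_isUnit hu with h2 | h2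
    · exact Polynomial.not_isUnit_X h2
    · rw [hu, map_mul, Polynomial.aeval_X] at h1
      exact (mul_ne_zero hf0 (h2.map (Polynomial.aeval f)).ne_zero) h1
  have hau : ¬ IsUnit a₀ := by
    intro h
    apply hfu
    have h1 := minpoly.aeval (MvPolynomial (Fin s) ℂ) f
    rw [← Polynomial.divX_mul_X_add (minpoly (MvPolynomial (Fin s) ℂ) f)] at h1
    simp only [map_add, map_mul, Polynomial.aeval_X, Polynomial.aeval_C] at h1
    have h2 : f ∣ algebraMap _ D a₀ := ⟨-_, by
      rw [mul_neg, mul_comm, eq_neg_iff_add_eq_zero, add_comm]; exact h1⟩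
    exact isUnit_of_dvd_unit h2 (h.map _)
  obtain ⟨π, hπ, hdvd⟩ := WfDvdMonoid.exists_irreducible_factor hau ha0
  have hprime : Prime π := hπ.prime
  have hP : (Ideal.span {π}).IsPrime := (Ideal.span_singleton_prime hπ.ne_zero).mpr hprime
  -- Lying over: as `fD ∩ B` lies in `(π)` by the norm argument, some prime `Q ∋ f` has
  -- `Q ∩ B = (π)`; the new point is the generic point of `Q`.
  obtain ⟨Q, hQ, hQp, hQc⟩ := Ideal.exists_ideal_over_prime_of_isIntegral (Ideal.span {π})
    (Ideal.span {f}) (by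
      intro b hb
      obtain ⟨h, hh⟩ := Ideal.mem_span_singleton'.mp (Ideal.mem_comap.mp hb)
      obtain ⟨m, hm⟩ := minpoly_coeff_zero_dvd_pow f h b (by rw [← hh, mul_comm])
      exact Ideal.mem_span_singleton.mpr (hprime.dvd_of_dvd_pow (hdvd.trans hm)))
  let ι : D →ₐ[ℂ] FractionRing (D ⧸ Q) :=
    (IsScalarTower.toAlgHom ℂ (D ⧸ Q) (FractionRing (D ⧸ Q))).comp (Ideal.Quotient.mkₐ ℂ Q)
  have hιker : ∀ d, ι d = 0 ↔ d ∈ Q := by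
    intro d
    have : ι d = algebraMap (D ⧸ Q) (FractionRing (D ⧸ Q)) (Ideal.Quotient.mk Q d) := rfl
    rw [this, FaithfulSMul.algebraMap_eq_zero_iff, Ideal.Quotient.eq_zero_iff_mem]
  have hgp : ∀ p, aeval (fun i => ι (π₀ (X i))) p = (ι.comp π₀) p := fun p => by
    rw [aeval_unique (ι.comp π₀)]; rfl
  refine ⟨FractionRing (D ⧸ Q), inferInstance, inferInstance, fun i => ι (π₀ (X i)), ?_, ?_, ?_⟩
  · intro p hp
    rw [hgp, AlgHom.comp_apply, hker p hp, map_zero]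
  · exact (hιker f).mpr (hQ (Ideal.mem_span_singleton_self f))
  · have h1 : TrGe (fun i => (ι.comp φ) (X i)) (s - 1) := by
      refine indep_quotient_of_irreducible π hπ (ι.comp φ) fun b hb => ?_
      have : b ∈ Q.comap (algebraMap (MvPolynomial (Fin s) ℂ) D) := (hιker _).mp hb
      rw [hQc] at this
      exact Ideal.mem_span_singleton.mp this
    refine TrGe.of_isAlgebraic (t := 0) _ _ h1 ∅ (by simp) (by omega) fun j => ?_
    rw [Set.union_empty]
    obtain ⟨p, hp⟩ := hπ₀ (φ (X j))
    have hmem : (ι.comp φ) (X j) ∈ Algebra.adjoin ℂ (Set.range fun i => ι (π₀ (X i))) := by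
      rw [Algebra.adjoin_range_eq_range_aeval]
      exact ⟨p, by rw [AlgHom.comp_apply, ← hp]; exact hgp p⟩
    exact isAlgebraic_algebraMap (⟨_, hmem⟩ : Algebra.adjoin ℂ (Set.range fun i => ι (π₀ (X i))))

/-! ### Krull dimension and points -/

theorem ringKrullDim_mvPolynomial_fin (s : ℕ) : ringKrullDim (MvPolynomial (Fin s) ℂ) = s := by
  rw [MvPolynomial.ringKrullDim_of_isNoetherianRing, ringKrullDim_eq_zero_of_field]; simp

/-- If no point of the zero locus of `I` has transcendence degree above `n`, then `R ⧸ I` has Krull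
dimension at most `n`. -/
theorem ringKrullDim_quotient_le_of_points {N n : ℕ} (I : Ideal (MvPolynomial (Fin N) ℂ))
    (h : ∀ (K : Type) (_ : Field K) (_ : Algebra ℂ K) (g : Fin N → K),
      (∀ p ∈ I, aeval g p = 0) → ¬ TrGe g (n + 1)) :
    ringKrullDim (MvPolynomial (Fin N) ℂ ⧸ I) ≤ n := by
  rw [ringKrullDim_quotient, Order.krullDim_eq_iSup_coheight]
  refine iSup_le fun P => ?_
  set Q : Ideal (MvPolynomial (Fin N) ℂ) := P.1.asIdeal with hQ
  have hQp : Q.IsPrime := P.1.isPrime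
  have hIQ : I ≤ Q := P.2
  have h1 : (Order.coheight P : WithBot ℕ∞) ≤ ringKrullDim (MvPolynomial (Fin N) ℂ ⧸ Q) := by
    rw [Order.coheight_eq_krullDim_Ici, ringKrullDim_quotient]
    refine Order.krullDim_le_of_strictMono
      (fun x : Set.Ici P => (⟨x.1.1, fun _ hp => (show P ≤ x.1 from x.2) hp⟩ :
        PrimeSpectrum.zeroLocus (Q : Set (MvPolynomial (Fin N) ℂ)))) ?_
    intro x y hxy
    exact hxy
  refine h1.trans ?_
  obtain ⟨s, φ, hφ, hinteg⟩ := exists_integral_inj_algHom_of_fg ℂ (MvPolynomial (Fin N) ℂ ⧸ Q)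
  have h2 : ringKrullDim (MvPolynomial (Fin N) ℂ ⧸ Q) ≤ s := by
    rw [← ringKrullDim_mvPolynomial_fin]
    algebraize [φ.toRingHom]
    have : Algebra.IsIntegral (MvPolynomial (Fin s) ℂ) (MvPolynomial (Fin N) ℂ ⧸ Q) := ⟨hinteg⟩
    refine Order.krullDim_le_of_strictMono
      (PrimeSpectrum.comap (algebraMap (MvPolynomial (Fin s) ℂ) (MvPolynomial (Fin N) ℂ ⧸ Q))) ?_
    intro x y hxy
    exact Ideal.IsIntegral.comap_lt_comap (I := x.asIdeal) hxy
  refine h2.trans ?_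
  by_contra hs
  have hs' : n + 1 ≤ s := by
    by_contra hc
    exact hs (by exact_mod_cast (by omega : s ≤ n))
  let L := FractionRing (MvPolynomial (Fin N) ℂ ⧸ Q)
  let ι : (MvPolynomial (Fin N) ℂ ⧸ Q) →ₐ[ℂ] L := IsScalarTower.toAlgHom ℂ _ L
  have hι : Function.Injective ι := IsFractionRing.injective _ L
  let θ : MvPolynomial (Fin N) ℂ →ₐ[ℂ] L := ι.comp (Ideal.Quotient.mkₐ ℂ Q)
  have hθ : ∀ p, aeval (fun i => θ (X i)) p = θ p := fun p => by
    conv_rhs => rw [aeval_unique θ]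
    rfl
  refine h L inferInstance inferInstance (fun i => θ (X i)) ?_ ?_
  · intro p hp
    have : Ideal.Quotient.mkₐ ℂ Q p = 0 := Ideal.Quotient.eq_zero_iff_mem.mpr (hIQ hp)
    rw [hθ, AlgHom.comp_apply, this, map_zero]
  · have hy : TrGe (fun i => ι (φ (X i))) (n + 1) := by
      refine TrGe.mono (r := s) ⟨id, ?_⟩ hs'
      exact (MvPolynomial.algebraicIndependent_X (Fin s) ℂ).map' (f := ι.comp φ) (hι.comp hφ)
    refine TrGe.of_isAlgebraic (t := 0) _ _ hy ∅ (by simp) (by omega) fun j => ?_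
    rw [Set.union_empty]
    obtain ⟨p, hp⟩ := Ideal.Quotient.mkₐ_surjective ℂ Q (φ (X j))
    have hmem : ι (φ (X j)) ∈ Algebra.adjoin ℂ (Set.range fun i => θ (X i)) := by
      rw [Algebra.adjoin_range_eq_range_aeval]
      exact ⟨p, by rw [← hp]; exact hθ p⟩
    exact isAlgebraic_algebraMap (⟨_, hmem⟩ : Algebra.adjoin ℂ (Set.range fun i => θ (X i)))

/-- A point of the zero locus of `I` with `r` algebraically independent coordinates forces
`R ⧸ I` to have Krull dimension at least `r`. -/
theorem le_ringKrullDim_quotient_of_point {N r : ℕ} (I : Ideal (MvPolynomial (Fin N) ℂ))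
    {A : Type*} [CommRing A] [IsDomain A] [Algebra ℂ A] (g : Fin N → A)
    (hI : ∀ p ∈ I, aeval g p = 0) (hg : TrGe g r) :
    (r : WithBot ℕ∞) ≤ ringKrullDim (MvPolynomial (Fin N) ℂ ⧸ I) := by
  let D := (aeval g : MvPolynomial (Fin N) ℂ →ₐ[ℂ] A).range
  let π₀ : MvPolynomial (Fin N) ℂ →ₐ[ℂ] D := (aeval g).rangeRestrict
  have hπ₀ : Function.Surjective π₀ := AlgHom.rangeRestrict_surjective _
  have hker : ∀ p ∈ I, π₀ p = 0 := fun p hp => Subtype.ext (hI p hp)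
  have h1 : ringKrullDim D ≤ ringKrullDim (MvPolynomial (Fin N) ℂ ⧸ I) :=
    ringKrullDim_le_of_surjective (Ideal.Quotient.lift I π₀.toRingHom hker)
      (Ideal.Quotient.lift_surjective_of_surjective I hker hπ₀)
  refine le_trans ?_ h1
  have : Algebra.FiniteType ℂ D := Algebra.FiniteType.of_surjective π₀ hπ₀
  have hG' : TrGe (fun i => π₀ (X i)) r := by
    refine TrGe.of_map D.val ?_
    simpa [π₀] using hg
  obtain ⟨s, φ, hφ, hinteg⟩ := exists_integral_inj_algHom_of_fg ℂ D
  have hrs : r ≤ s := TrGe.le_of_integral _ hG' φ hinteg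
  refine le_trans (by exact_mod_cast hrs) (b := (s : WithBot ℕ∞)) ?_
  rw [← ringKrullDim_mvPolynomial_fin]
  algebraize [φ.toRingHom]
  have : Algebra.IsIntegral (MvPolynomial (Fin s) ℂ) D := ⟨hinteg⟩
  have hFS : FaithfulSMul (MvPolynomial (Fin s) ℂ) D :=
    (faithfulSMul_iff_algebraMap_injective _ _).mpr hφ
  have hgu : Algebra.HasGoingUp (MvPolynomial (Fin s) ℂ) D := ⟨fun {q} _ P _ hlt => by
    obtain ⟨Q, h1, h2, h3⟩ := Ideal.exists_ideal_over_prime_of_isIntegral q P hlt.le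
    exact ⟨Q, h1, h2, ⟨h3.symm⟩⟩⟩
  rw [ringKrullDim, Order.krullDim]
  refine iSup_le fun l => ?_
  obtain ⟨⟨P, hP1, hP2⟩⟩ := Ideal.nonempty_primesOver (S := D) l.head.asIdeal
  obtain ⟨L, hL, -, -⟩ := Ideal.exists_ltSeries_of_hasGoingUp l P
  rw [← hL]
  exact Order.LTSeries.length_le_krullDim L

/-! ### Points of ideals invariant under one-parameter groups -/

/-- The zero locus of `I` has a point, over some extension field of `ℂ`, at which the coordinates
in `Z` are `0`, those in `N` are `1`, and whose coordinates have transcendence degree at least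
`r`. -/
def HasPoint {n : ℕ} (I : Ideal (MvPolynomial (Fin n) ℂ)) (Z N : Finset (Fin n)) (r : ℕ) : Prop :=
  ∃ (K : Type) (_ : Field K) (_ : Algebra ℂ K) (g : Fin n → K),
    (∀ p ∈ I, aeval g p = 0) ∧ (∀ m ∈ Z, g m = 0) ∧ (∀ m ∈ N, g m = 1) ∧ TrGe g r

/-- The zero locus of `I` is stable under the one-parameter group acting with weights `w`. -/
def ScaleInv {n : ℕ} (I : Ideal (MvPolynomial (Fin n) ℂ)) (w : Fin n → ℤ) : Prop :=
  ∀ (K : Type) (_ : Field K) (_ : Algebra ℂ K) (g : Fin n → K) (τ : K), τ ≠ 0 →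
    (∀ p ∈ I, aeval g p = 0) → ∀ p ∈ I, aeval (fun m => τ ^ w m * g m) p = 0

/-- If a one-parameter group contracts the locus `{c_Z = 0, c_N = 1}` as `t → 0`, the closed cone
swept out by a point contains the limit point, so it meets `c_a = 0`, and it does so in
codimension at most one. -/
theorem HasPoint.slice {n : ℕ} {I : Ideal (MvPolynomial (Fin n) ℂ)} {Z N : Finset (Fin n)} {r : ℕ}
    (h : HasPoint I Z N (r + 1)) {w : Fin n → ℤ} (hw : ScaleInv I w)
    (hpos : ∀ m, m ∈ Z ∨ (m ∈ N ∧ w m = 0) ∨ (m ∉ N ∧ 0 < w m)) (a : Fin n) (ha : 0 < w a) :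
    HasPoint I (insert a Z) N r := by
  obtain ⟨K, _, _, g, hI, hZ, hN, hr⟩ := h
  -- The orbit of the point, extended over `t = 0`; at `t = 1` it is the given point.
  let G : Fin n → Polynomial K := fun m => Polynomial.C (g m) * Polynomial.X ^ (w m).toNat
  let L := FractionRing (Polynomial K)
  let ι : Polynomial K →ₐ[ℂ] L := IsScalarTower.toAlgHom ℂ (Polynomial K) L
  have hι : Function.Injective ι := IsFractionRing.injective (Polynomial K) L
  let κ : K →ₐ[ℂ] L := ι.comp (IsScalarTower.toAlgHom ℂ K (Polynomial K))
  let τ : L := ι Polynomial.X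
  have hτ : τ ≠ 0 := by
    intro h0
    exact Polynomial.X_ne_zero (hι (by rw [map_zero]; exact h0))
  have hGI : ∀ p ∈ I, aeval G p = 0 := by
    intro p hp
    apply hι
    rw [map_zero, ← AlgHom.comp_apply, comp_aeval]
    have h1 : ∀ p ∈ I, aeval (fun m => κ (g m)) p = 0 := by
      intro p hp
      have : aeval (fun m => κ (g m)) p = κ (aeval g p) := by
        rw [← AlgHom.comp_apply, comp_aeval]
      rw [this, hI p hp, map_zero]
    have h2 := hw L inferInstance inferInstance _ τ hτ h1 p hp
    have h3 : (fun m => τ ^ w m * κ (g m)) = fun m => ι (G m) := by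
      funext m
      have hκ : κ (g m) = ι (Polynomial.C (g m)) := rfl
      rcases hpos m with hm | hm
      · simp [G, hZ m hm]
      · have h0 : 0 ≤ w m := by rcases hm with hm | hm <;> omega
        obtain ⟨k, hk⟩ := Int.eq_ofNat_of_zero_le h0
        rw [hκ]
        simp only [G, hk, Int.toNat_natCast, map_mul, map_pow, zpow_natCast, τ, mul_comm]
    rw [h3] at h2
    exact h2
  have hGr : TrGe G (r + 1) := by
    refine TrGe.of_map ((Polynomial.aeval (1 : K)).restrictScalars ℂ) ?_
    simpa [G] using hr
  obtain ⟨K', hK', hA, g', h1, h2, h3⟩ := exists_specialization G hGr a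
    ((Polynomial.aeval (0 : K)).restrictScalars ℂ) (by
      have : (w a).toNat ≠ 0 := by omega
      simp [G, this])
  refine ⟨K', hK', hA, g', fun p hp => h1 p (hGI p hp), ?_, ?_, h3⟩
  · intro m hm
    rcases Finset.mem_insert.mp hm with rfl | hm
    · exact h2
    · simpa using h1 (X m) (by simp [G, hZ m hm])
  · intro m hm
    by_cases hmZ : m ∈ Z
    · have h01 : (0 : K) = 1 := (hZ m hmZ).symm.trans (hN m hm)
      exact absurd h01 zero_ne_one
    have hw0 : w m = 0 := by
      rcases hpos m with h | h | h
      exacts [absurd h hmZ, h.2, absurd hm h.1]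
    have := h1 (X m - 1) (by simp [G, hN m hm, hw0])
    simpa [sub_eq_zero] using this

/-- A coordinate is either zero or can be scaled to one. -/
theorem HasPoint.normalise {n : ℕ} {I : Ideal (MvPolynomial (Fin n) ℂ)} {Z N : Finset (Fin n)}
    {r : ℕ} (h : HasPoint I Z N (r + 1)) {w : Fin n → ℤ} (hw : ScaleInv I w) (a : Fin n)
    (ha : w a ≠ 0) (hN0 : ∀ m ∈ N, w m = 0) :
    HasPoint I (insert a Z) N (r + 1) ∨ HasPoint I Z (insert a N) r := by
  obtain ⟨K, _, _, g, hI, hZ, hN, hr⟩ := h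
  by_cases hga : g a = 0
  · refine Or.inl ⟨K, _, _, g, hI, fun m hm => ?_, hN, hr⟩
    rcases Finset.mem_insert.mp hm with rfl | hm
    exacts [hga, hZ m hm]
  right
  let L := AlgebraicClosure K
  let κ : K →ₐ[ℂ] L := IsScalarTower.toAlgHom ℂ K L
  have hκ : Function.Injective κ := (algebraMap K L).injective
  have hga' : κ (g a) ≠ 0 := by rwa [Ne, map_eq_zero_iff κ hκ]
  obtain ⟨τ, hτ, hτa⟩ : ∃ τ : L, τ ≠ 0 ∧ τ ^ w a = (κ (g a))⁻¹ := by
    have hpos : 0 < (w a).natAbs := by omega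
    obtain ⟨z, hz⟩ := IsAlgClosed.exists_pow_nat_eq (κ (g a))⁻¹ hpos
    have hz0 : z ≠ 0 := by
      rintro rfl
      rw [zero_pow hpos.ne'] at hz
      exact (inv_ne_zero hga') hz.symm
    rcases Int.natAbs_eq (w a) with hw' | hw'
    · exact ⟨z, hz0, by rw [hw', zpow_natCast, hz]⟩
    · exact ⟨z⁻¹, inv_ne_zero hz0, by rw [hw', zpow_neg, zpow_natCast, inv_pow, hz, inv_inv]⟩
  refine ⟨L, inferInstance, inferInstance, fun m => τ ^ w m * κ (g m), ?_, ?_, ?_, ?_⟩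
  · refine hw L _ _ _ τ hτ ?_
    intro p hp
    have : aeval (fun m => κ (g m)) p = κ (aeval g p) := by
      rw [← AlgHom.comp_apply, comp_aeval]
    rw [this, hI p hp, map_zero]
  · intro m hm
    simp [hZ m hm]
  · intro m hm
    rcases Finset.mem_insert.mp hm with rfl | hm
    · simp only []
      rw [hτa, inv_mul_cancel₀ hga']
    · simp [hN m hm, hN0 m hm]
  · refine TrGe.of_isAlgebraic (t := 1) _ _ (hr.map κ hκ) {τ} (by simp) le_rfl fun m => ?_
    set S := Algebra.adjoin ℂ (Set.range (fun m => τ ^ w m * κ (g m)) ∪ {τ})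
    have h1 : IsAlgebraic S τ :=
      isAlgebraic_algebraMap (⟨τ, Algebra.subset_adjoin (by simp)⟩ : S)
    have h2 : IsAlgebraic S (τ ^ w m * κ (g m)) :=
      isAlgebraic_algebraMap (⟨_, Algebra.subset_adjoin (Or.inl ⟨m, rfl⟩)⟩ : S)
    have h3 : IsAlgebraic S ((τ ^ w m)⁻¹) := by
      refine IsAlgebraic.inv ?_
      rcases Int.eq_nat_or_neg (w m) with ⟨k, hk | hk⟩
      · rw [hk, zpow_natCast]; exact h1.pow k
      · rw [hk, zpow_neg, zpow_natCast]; exact (h1.pow k).inv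
    have h4 : κ (g m) = (τ ^ w m)⁻¹ * (τ ^ w m * κ (g m)) := by
      rw [← mul_assoc, inv_mul_cancel₀ (zpow_ne_zero _ hτ), one_mul]
    rw [h4]
    exact h3.mul h2

theorem HasPoint.mono {n : ℕ} {I : Ideal (MvPolynomial (Fin n) ℂ)} {Z N Z' N' : Finset (Fin n)}
    {r r' : ℕ} (h : HasPoint I Z N r) (hZ : Z' ⊆ Z) (hN : N' ⊆ N) (hr : r' ≤ r) :
    HasPoint I Z' N' r' := by
  obtain ⟨K, _, _, g, h1, h2, h3, h4⟩ := h
  exact ⟨K, _, _, g, h1, fun m hm => h2 m (hZ hm), fun m hm => h3 m (hN hm), h4.mono hr⟩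

/-- If there is an algebraically independent coordinate, then some unconstrained coordinate is
nonzero. -/
theorem HasPoint.exists_ne_zero {n : ℕ} {I : Ideal (MvPolynomial (Fin n) ℂ)} {Z N : Finset (Fin n)}
    {r : ℕ} (h : HasPoint I Z N (r + 1)) :
    ∃ (K : Type) (_ : Field K) (_ : Algebra ℂ K) (g : Fin n → K),
      (∀ p ∈ I, aeval g p = 0) ∧ (∀ m ∈ Z, g m = 0) ∧ (∀ m ∈ N, g m = 1) ∧
      ∃ m, m ∉ Z ∧ m ∉ N ∧ g m ≠ 0 := by
  obtain ⟨K, _, _, g, h1, h2, h3, s, hs⟩ := h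
  have ht := hs.transcendental 0
  refine ⟨K, _, _, g, h1, h2, h3, s 0, fun hm => ?_, fun hm => ?_, hs.ne_zero 0⟩
  · exact hs.ne_zero 0 (h2 _ hm)
  · refine ht ?_
    rw [Function.comp_apply, h3 _ hm]
    exact isAlgebraic_one

/-- If the transcendence degree is as large as the number of unconstrained coordinates, then the
whole affine space `{c_Z = 0, c_N = 1}` lies in the zero locus. -/
theorem HasPoint.eq_zero_of_full {n : ℕ} {I : Ideal (MvPolynomial (Fin n) ℂ)}
    {Z N : Finset (Fin n)} {r : ℕ} (h : HasPoint I Z N r) (hr : n ≤ r + (Z ∪ N).card)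
    {p : MvPolynomial (Fin n) ℂ} (hp : p ∈ I) (v : Fin n → ℂ) (hvZ : ∀ m ∈ Z, v m = 0)
    (hvN : ∀ m ∈ N, v m = 1) : aeval v p = 0 := by
  classical
  obtain ⟨K, _, _, g, h1, h2, h3, s, hs⟩ := h
  have hsZ : ∀ i, s i ∉ Z := fun i hi => hs.ne_zero i (h2 _ hi)
  have hsN : ∀ i, s i ∉ N := fun i hi => by
    refine hs.transcendental i ?_
    rw [Function.comp_apply, h3 _ hi]
    exact isAlgebraic_one
  have hinj : Function.Injective s := fun i j hij => hs.injective (by simp [hij])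
  have hcover : ∀ m, m ∉ Z → m ∉ N → ∃ i, s i = m := by
    intro m hmZ hmN
    have hdisj : Disjoint (Z ∪ N) (Finset.univ.image s) := by
      rw [Finset.disjoint_left]
      intro x hx hx'
      obtain ⟨i, -, rfl⟩ := Finset.mem_image.mp hx'
      rcases Finset.mem_union.mp hx with hx | hx
      exacts [hsZ i hx, hsN i hx]
    have hu : (Z ∪ N) ∪ Finset.univ.image s = Finset.univ := by
      apply Finset.eq_univ_of_card
      rw [Finset.card_union_of_disjoint hdisj, Finset.card_image_of_injective _ hinj]
      simp only [Finset.card_univ, Fintype.card_fin]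
      have hle := Finset.card_le_univ ((Z ∪ N) ∪ Finset.univ.image s)
      rw [Finset.card_union_of_disjoint hdisj, Finset.card_image_of_injective _ hinj] at hle
      simp only [Finset.card_univ, Fintype.card_fin] at hle
      omega
    have hm : m ∈ (Z ∪ N) ∪ Finset.univ.image s := by rw [hu]; exact Finset.mem_univ m
    simp only [Finset.mem_union, hmZ, hmN, false_or, Finset.mem_image, Finset.mem_univ,
      true_and] at hm
    exact hm
  let θ : Fin n → MvPolynomial (Fin r) ℂ := fun m =>
    if hZ : m ∈ Z then 0 else if hN : m ∈ N then 1 else X (hcover m hZ hN).choose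
  have key : ∀ (K' : Type) [Field K'] [Algebra ℂ K'] (u : Fin n → K'), (∀ m ∈ Z, u m = 0) →
      (∀ m ∈ N, u m = 1) → aeval u p = aeval (u ∘ s) (aeval θ p) := by
    intro K' _ _ u hu0 hu1
    rw [← AlgHom.comp_apply, comp_aeval]
    congr 2
    funext m
    by_cases hZ : m ∈ Z
    · simp [θ, hZ, hu0 m hZ]
    by_cases hN : m ∈ N
    · simp [θ, hZ, hN, hu1 m hN]
    · simp [θ, hZ, hN, (hcover m hZ hN).choose_spec]
  have h0 : aeval θ p = 0 := by
    refine algebraicIndependent_iff.mp hs _ ?_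
    rw [← key K g h2 h3, h1 p hp]
  rw [key ℂ v hvZ hvN, h0, map_zero]

/-! ### Rank and minors -/

theorem exists_indep_rows {K : Type*} [Field K] {m n : Type*} [Fintype m] [Fintype n]
    (A : Matrix m n K) {s : ℕ} (h : s ≤ A.rank) :
    ∃ r : Fin s → m, (A.submatrix r id).rank = s := by
  obtain ⟨κ, a, ha, hspan, hli⟩ := exists_linearIndependent' K A.row
  have : Finite κ := Finite.of_injective a ha
  have := Fintype.ofFinite κ
  have hc : Fintype.card κ = A.rank := by
    rw [Matrix.rank_eq_finrank_span_row, ← hspan, finrank_span_eq_card hli]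
  let e : Fin (Fintype.card κ) ≃ κ := (Fintype.equivFin κ).symm
  let j : Fin s → κ := fun i => e (Fin.castLE (by omega) i)
  have hj : Function.Injective j := e.injective.comp (Fin.castLE_injective _)
  refine ⟨a ∘ j, ?_⟩
  have hli' : LinearIndependent K (A.submatrix (a ∘ j) id).row := hli.comp j hj
  rw [hli'.rank_matrix, Fintype.card_fin]

theorem minors_eq_zero_iff_rank_lt {K : Type*} [Field K] {m n : Type*} [Fintype m] [Fintype n]
    (A : Matrix m n K) (s : ℕ) :
    (∀ (r : Fin s → m) (c : Fin s → n), (A.submatrix r c).det = 0) ↔ A.rank < s := by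
  constructor
  · intro h
    by_contra hs
    push Not at hs
    obtain ⟨r, hr⟩ := exists_indep_rows A hs
    obtain ⟨c, hc⟩ := exists_indep_rows (A.submatrix r id).transpose
      (s := s) (by rw [Matrix.rank_transpose, hr])
    have h1 : ((A.submatrix r id).transpose.submatrix c id) = (A.submatrix r c).transpose := rfl
    rw [h1, Matrix.rank_transpose] at hc
    have h2 := Matrix.exists_mulVec_eq_zero_iff.mpr (h r c)
    obtain ⟨v, hv, hv0⟩ := h2
    have h3 := LinearMap.finrank_range_add_finrank_ker (A.submatrix r c).mulVecLin
    change (A.submatrix r c).rank + _ = _ at h3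
    rw [hc] at h3
    simp only [Module.finrank_fintype_fun_eq_card, Fintype.card_fin, Nat.add_eq_left] at h3
    have h4 : LinearMap.ker (A.submatrix r c).mulVecLin = ⊥ := Submodule.finrank_eq_zero.mp h3
    exact hv ((LinearMap.ker_eq_bot'.mp h4) v hv0)
  · intro h r c
    by_contra hd
    have h1 : (A.submatrix r c).rank = s := by
      rw [Matrix.rank_of_isUnit _ ((Matrix.isUnit_iff_isUnit_det _).mpr (IsUnit.mk0 _ hd)),
        Fintype.card_fin]
    have := Matrix.rank_submatrix_le A r c
    omega

/-! ### The Nanson matrix of a cubic form -/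

theorem isHomogeneous_nansonRow {K : Type*} [CommRing K] {Q : Fin 4 → MvPolynomial (Fin 4) K}
    (hQ : ∀ i, (Q i).IsHomogeneous 2) (r : Fin 20) : (nansonRow Q r).IsHomogeneous 3 := by
  have hJ : (Matrix.det (Matrix.of fun i j : Fin 4 => pderiv j (Q i))).IsHomogeneous 4 := by
    rw [Matrix.det_apply]
    refine IsHomogeneous.sum _ _ _ fun σ _ => ?_
    have h := IsHomogeneous.prod (Finset.univ : Finset (Fin 4))
      (fun i => Matrix.of (fun i j : Fin 4 => pderiv j (Q i)) (σ i) i) (fun _ => 1)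
      (fun i _ => (hQ (σ i)).pderiv)
    rw [Units.smul_def, zsmul_eq_mul]
    have h0 : ((((Equiv.Perm.sign σ : ℤˣ) : ℤ) : MvPolynomial (Fin 4) K)).IsHomogeneous 0 := by
      rw [← map_intCast (C : K →+* MvPolynomial (Fin 4) K)]
      exact isHomogeneous_C _ _
    simpa using h0.mul h
  unfold nansonRow
  split_ifs
  · exact (isHomogeneous_X K _).mul (hQ _)
  · exact hJ.pderiv

theorem exists_cubicExp_eq (d : Fin 4 →₀ ℕ) (hd : d.degree = 3) : ∃ m, cubicExp m = d := by
  have h : d 0 + d 1 + d 2 + d 3 = 3 := by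
    rw [Finsupp.degree_eq_sum, Fin.sum_univ_four] at hd
    exact hd
  have key : ∀ a b c e : Fin 4, (a : ℕ) + b + c + e = 3 → ∃ m : Fin 20,
      (![![3,0,0,0], ![2,1,0,0], ![2,0,1,0], ![2,0,0,1],
       ![1,2,0,0], ![1,1,1,0], ![1,1,0,1], ![1,0,2,0], ![1,0,1,1], ![1,0,0,2],
       ![0,3,0,0], ![0,2,1,0], ![0,2,0,1], ![0,1,2,0], ![0,1,1,1], ![0,1,0,2],
       ![0,0,3,0], ![0,0,2,1], ![0,0,1,2], ![0,0,0,3]] : Fin 20 → Fin 4 → ℕ) m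
        = ![(a : ℕ), b, c, e] := by decide
  obtain ⟨m, hm⟩ := key ⟨d 0, by omega⟩ ⟨d 1, by omega⟩ ⟨d 2, by omega⟩ ⟨d 3, by omega⟩ h
  refine ⟨m, ?_⟩
  ext i
  unfold cubicExp
  rw [Finsupp.equivFunOnFinite_symm_apply_apply, hm]
  fin_cases i <;> rfl

theorem degree_cubicExp (m : Fin 20) : (cubicExp m).degree = 3 := by
  rw [Finsupp.degree_eq_sum, Fin.sum_univ_four]
  revert m
  unfold cubicExp
  simp only [Finsupp.equivFunOnFinite_symm_apply_apply]
  decide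

/-- The cubic form with coefficient vector `g`. -/
noncomputable def cubicOf {K : Type*} [CommRing K] (g : Fin 20 → K) : MvPolynomial (Fin 4) K :=
  ∑ m, monomial (cubicExp m) (g m)

/-- The Nanson matrix of the cubic form with coefficient vector `g`. -/
noncomputable def nan {K : Type*} [CommRing K] (g : Fin 20 → K) : Matrix (Fin 20) (Fin 20) K :=
  nansonMatrix fun i => pderiv i (cubicOf g)

theorem isHomogeneous_cubicOf {K : Type*} [CommRing K] (g : Fin 20 → K) :
    (cubicOf g).IsHomogeneous 3 :=
  IsHomogeneous.sum _ _ _ fun m _ => isHomogeneous_monomial _ (degree_cubicExp m)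

theorem map_nansonRow {A B : Type*} [CommRing A] [CommRing B] (f : A →+* B)
    (Q : Fin 4 → MvPolynomial (Fin 4) A) (r : Fin 20) :
    map f (nansonRow Q r) = nansonRow (fun i => map f (Q i)) r := by
  unfold nansonRow
  split_ifs
  · simp
  · have h : Matrix.of (fun i j : Fin 4 => pderiv j (map f (Q i)))
        = (map f).mapMatrix (Matrix.of fun i j : Fin 4 => pderiv j (Q i)) := by
      ext1 i j
      exact pderiv_map
    rw [← pderiv_map, RingHom.map_det, h]

theorem map_genericNansonMatrix {K : Type*} [CommRing K] [Algebra ℂ K] (g : Fin 20 → K) :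
    genericNansonMatrix.map (aeval g) = nan g := by
  ext r c
  have h : map (aeval g : MvPolynomial (Fin 20) ℂ →ₐ[ℂ] K).toRingHom genericCubic = cubicOf g := by
    simp [genericCubic, cubicOf, map_monomial]
  unfold genericNansonMatrix nan nansonMatrix
  simp only [Matrix.map_apply, Matrix.of_apply]
  rw [← h]
  have := map_nansonRow (aeval g : MvPolynomial (Fin 20) ℂ →ₐ[ℂ] K).toRingHom
    (fun i => pderiv i genericCubic) r
  simp only [← pderiv_map] at this
  simp only [pderiv_map] at this ⊢
  rw [← this, coeff_map]
  rfl

/-- The points of `Vₖ` over any extension field of `ℂ` are the cubics whose Nanson matrix has rank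
at most `20 - k`. -/
theorem minors_vanish_iff {K : Type*} [Field K] [Algebra ℂ K] (g : Fin 20 → K) (k : ℕ) :
    (∀ p ∈ nansonMinorsIdeal k, aeval g p = 0) ↔ (nan g).rank < 20 - k + 1 := by
  rw [← minors_eq_zero_iff_rank_lt, ← map_genericNansonMatrix]
  have hdet : ∀ (r c : Fin (20 - k + 1) → Fin 20),
      ((genericNansonMatrix.map (aeval g)).submatrix r c).det
        = aeval g (genericNansonMatrix.submatrix r c).det := by
    intro r c
    rw [AlgHom.map_det]
    rfl
  constructor
  · intro h r c
    rw [hdet]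
    exact h _ (Ideal.subset_span ⟨(r, c), rfl⟩)
  · intro h p hp
    have : nansonMinorsIdeal k ≤ RingHom.ker (aeval g : MvPolynomial (Fin 20) ℂ →ₐ[ℂ] K) := by
      refine Ideal.span_le.mpr ?_
      rintro _ ⟨rc, rfl⟩
      rw [SetLike.mem_coe, RingHom.mem_ker, ← hdet]
      exact h _ _
    exact this hp

/-! ### Invariance under linear substitutions -/

/-- The linear substitution `xᵢ ↦ ∑ⱼ Tᵢⱼ xⱼ`. -/
noncomputable def linSub {K : Type*} [CommRing K] (T : Matrix (Fin 4) (Fin 4) K) :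
    MvPolynomial (Fin 4) K →ₐ[K] MvPolynomial (Fin 4) K :=
  aeval fun i => ∑ j, C (T i j) * X j

theorem pderiv_linSub {K : Type*} [CommRing K] (T : Matrix (Fin 4) (Fin 4) K)
    (F : MvPolynomial (Fin 4) K) (j : Fin 4) :
    pderiv j (linSub T F) = ∑ i, C (T i j) * linSub T (pderiv i F) := by
  induction F using MvPolynomial.induction_on with
  | C a => simp [linSub]
  | add p q hp hq => simp only [map_add, hp, hq, mul_add, Finset.sum_add_distrib]
  | mul_X p m hp =>
    have hX : pderiv j (linSub T (X m)) = C (T m j) := by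
      simp [linSub, Pi.single_apply]
    rw [map_mul, Derivation.leibniz, hp, hX]
    simp only [Derivation.leibniz, map_add, smul_eq_mul, map_mul, mul_add,
      Finset.sum_add_distrib, pderiv_X, Pi.single_apply]
    congr 1
    · rw [Finset.sum_eq_single m]
      · simp [mul_comm]
      · intro b _ hb
        simp [hb.symm]
      · simp
    · rw [Finset.mul_sum]
      exact Finset.sum_congr rfl fun i _ => by ring

/-- The Hessian determinant, that is the Jacobian determinant of the partial derivatives. -/
noncomputable def hess {K : Type*} [CommRing K] (F : MvPolynomial (Fin 4) K) :
    MvPolynomial (Fin 4) K :=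
  Matrix.det (Matrix.of fun i j : Fin 4 => pderiv j (pderiv i F))

theorem hess_linSub {K : Type*} [CommRing K] (T : Matrix (Fin 4) (Fin 4) K)
    (F : MvPolynomial (Fin 4) K) :
    hess (linSub T F) = C (T.det ^ 2) * linSub T (hess F) := by
  have h : Matrix.of (fun i j : Fin 4 => pderiv j (pderiv i (linSub T F)))
      = (T.map C).transpose *
        ((linSub T).mapMatrix (Matrix.of fun i j : Fin 4 => pderiv j (pderiv i F))) * T.map C := by
    ext1 i j
    rw [Matrix.of_apply, pderiv_linSub]
    simp only [map_sum, Derivation.leibniz, pderiv_C, mul_zero, add_zero, pderiv_linSub,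
      Matrix.mul_apply, Matrix.transpose_apply, Matrix.map_apply, AlgHom.mapMatrix_apply,
      Matrix.of_apply, smul_eq_mul, Finset.mul_sum, Finset.sum_mul]
    rw [Finset.sum_comm]
    exact Finset.sum_congr rfl fun _ _ => Finset.sum_congr rfl fun _ _ => by ring
  have hT : (T.map (C : K →+* MvPolynomial (Fin 4) K)).det = C T.det := by
    rw [RingHom.map_det]; rfl
  unfold hess
  rw [h, Matrix.det_mul, Matrix.det_mul, Matrix.det_transpose, ← AlgHom.map_det, hT, map_pow]
  ring

/-- The span of the twenty cubics of Nanson's construction. -/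
noncomputable def nanSpan {K : Type*} [Field K] (F : MvPolynomial (Fin 4) K) :
    Submodule K (MvPolynomial (Fin 4) K) :=
  Submodule.span K (Set.range (nansonRow fun i => pderiv i F))

theorem X_mul_pderiv_mem {K : Type*} [Field K] (F : MvPolynomial (Fin 4) K) (i j : Fin 4) :
    X j * pderiv i F ∈ nanSpan F := by
  refine Submodule.subset_span ⟨⟨4 * i + j, by omega⟩, ?_⟩
  unfold nansonRow
  rw [dif_pos (by change 4 * (i : ℕ) + j < 16; omega)]
  have h1 : (4 * (i : ℕ) + j) % 4 = j := by omega
  have h2 : (4 * (i : ℕ) + j) / 4 = i := by omega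
  simp only [h1, h2]

theorem pderiv_hess_mem {K : Type*} [Field K] (F : MvPolynomial (Fin 4) K) (i : Fin 4) :
    pderiv i (hess F) ∈ nanSpan F := by
  refine Submodule.subset_span ⟨⟨16 + i, by omega⟩, ?_⟩
  unfold nansonRow
  rw [dif_neg (by change ¬ (16 + (i : ℕ) < 16); omega)]
  simp only [Nat.add_sub_cancel_left]
  rfl

theorem nanSpan_le {K : Type*} [Field K] {F : MvPolynomial (Fin 4) K}
    {S : Submodule K (MvPolynomial (Fin 4) K)} (h1 : ∀ i j, X j * pderiv i F ∈ S)
    (h2 : ∀ i, pderiv i (hess F) ∈ S) : nanSpan F ≤ S := by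
  refine Submodule.span_le.mpr ?_
  rintro _ ⟨r, rfl⟩
  unfold nansonRow
  split_ifs
  · exact h1 _ _
  · exact h2 _

theorem nanSpan_linSub_le {K : Type*} [Field K] {T : Matrix (Fin 4) (Fin 4) K} (hT : T.det ≠ 0)
    (F : MvPolynomial (Fin 4) K) :
    nanSpan (linSub T F) ≤ (nanSpan F).map (linSub T).toLinearMap := by
  have hC : ∀ (a : K) {p}, p ∈ (nanSpan F).map (linSub T).toLinearMap →
      C a * p ∈ (nanSpan F).map (linSub T).toLinearMap := by
    intro a p hp
    rw [← smul_eq_C_mul]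
    exact Submodule.smul_mem _ _ hp
  have hX : ∀ j, X j = ∑ l, C (T⁻¹ j l) * linSub T (X l) := by
    intro j
    have h1 : T⁻¹ * T = 1 := Matrix.nonsing_inv_mul _ (IsUnit.mk0 _ hT)
    simp only [linSub, aeval_X, Finset.mul_sum]
    rw [Finset.sum_comm]
    simp only [← mul_assoc, ← Finset.sum_mul, ← map_mul, ← map_sum]
    simp only [← Matrix.mul_apply, h1, Matrix.one_apply]
    simp
  refine nanSpan_le (fun i j => ?_) fun i => ?_
  · rw [pderiv_linSub, Finset.mul_sum]
    refine Submodule.sum_mem _ fun k _ => ?_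
    rw [mul_left_comm]
    refine hC _ ?_
    rw [hX j, Finset.sum_mul]
    refine Submodule.sum_mem _ fun l _ => ?_
    rw [mul_assoc, ← map_mul]
    exact hC _ (Submodule.mem_map_of_mem (X_mul_pderiv_mem F k l))
  · rw [hess_linSub, Derivation.leibniz, pderiv_C, smul_zero, add_zero, pderiv_linSub, smul_eq_mul]
    refine hC _ (Submodule.sum_mem _ fun k _ => hC _ ?_)
    exact Submodule.mem_map_of_mem (pderiv_hess_mem F k)

/-- The coefficient vector of a cubic form. -/
noncomputable def coeffVec (K : Type*) [Field K] : MvPolynomial (Fin 4) K →ₗ[K] (Fin 20 → K) :=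
  LinearMap.pi fun c => lcoeff K (cubicExp c)

theorem coeffVec_apply {K : Type*} [Field K] (f : MvPolynomial (Fin 4) K) (c : Fin 20) :
    coeffVec K f c = coeff (cubicExp c) f := rfl

theorem rank_nan_eq {K : Type*} [Field K] (g : Fin 20 → K) :
    (nan g).rank = Module.finrank K (nanSpan (cubicOf g)) := by
  have h1 : (nanSpan (cubicOf g)).map (coeffVec K) = Submodule.span K (Set.range (nan g).row) := by
    rw [nanSpan, Submodule.map_span, ← Set.range_comp]
    rfl
  rw [Matrix.rank_eq_finrank_span_row, ← h1]
  have hinj : Function.Injective ((coeffVec K).domRestrict (nanSpan (cubicOf g))) := by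
    rw [← LinearMap.ker_eq_bot, LinearMap.ker_eq_bot']
    rintro ⟨f, hf⟩ h0
    have hhom : nanSpan (cubicOf g) ≤ homogeneousSubmodule (Fin 4) K 3 := by
      refine Submodule.span_le.mpr ?_
      rintro _ ⟨r, rfl⟩
      exact isHomogeneous_nansonRow (fun i => (isHomogeneous_cubicOf g).pderiv) r
    ext d
    by_contra hd
    obtain ⟨m, rfl⟩ := exists_cubicExp_eq d (by
      rw [Finsupp.degree_eq_weight_one]
      exact hhom hf hd)
    exact hd (congrFun h0 m)
  rw [← LinearMap.finrank_range_of_inj hinj, LinearMap.range_domRestrict]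

/-- An invertible linear substitution does not increase the rank of the Nanson matrix. -/
theorem rank_nan_linSub_le {K : Type*} [Field K] {T : Matrix (Fin 4) (Fin 4) K} (hT : T.det ≠ 0)
    {g g' : Fin 20 → K} (h : cubicOf g' = linSub T (cubicOf g)) :
    (nan g').rank ≤ (nan g).rank := by
  rw [rank_nan_eq, rank_nan_eq, h]
  have hfin : Module.Finite K (nanSpan (cubicOf g)) :=
    Module.Finite.span_of_finite K (Set.finite_range _)
  exact (Submodule.finrank_mono (nanSpan_linSub_le hT _)).trans (Submodule.finrank_map_le _ _)

theorem minors_vanish_of_linSub {K : Type*} [Field K] [Algebra ℂ K]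
    {T : Matrix (Fin 4) (Fin 4) K} (hT : T.det ≠ 0)
    {g g' : Fin 20 → K} (h : cubicOf g' = linSub T (cubicOf g)) {k : ℕ}
    (hg : ∀ p ∈ nansonMinorsIdeal k, aeval g p = 0) :
    ∀ p ∈ nansonMinorsIdeal k, aeval g' p = 0 := by
  rw [minors_vanish_iff] at hg ⊢
  exact (rank_nan_linSub_le hT h).trans_lt hg

/-- The weight of the monomial `m` when `xᵢ` has weight `lam i`. -/
noncomputable def monWeight (lam : Fin 4 → ℤ) (m : Fin 20) : ℤ := ∑ i, lam i * cubicExp m i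

theorem scaleInv_nansonMinorsIdeal (k : ℕ) (lam : Fin 4 → ℤ) :
    ScaleInv (nansonMinorsIdeal k) (monWeight lam) := by
  intro K _ _ g τ hτ hg
  refine minors_vanish_of_linSub (T := Matrix.diagonal fun i => τ ^ lam i) ?_ ?_ hg
  · rw [Matrix.det_diagonal]
    exact Finset.prod_ne_zero_iff.mpr fun i _ => zpow_ne_zero _ hτ
  · simp only [cubicOf, map_sum]
    refine Finset.sum_congr rfl fun m _ => ?_
    have hX : ∀ i, ∑ j, C (Matrix.diagonal (fun i => τ ^ lam i) i j) * X j
        = C (τ ^ lam i) * (X i : MvPolynomial (Fin 4) K) := by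
      intro i
      rw [Finset.sum_eq_single i]
      · simp
      · intro j _ hj
        simp [Matrix.diagonal_apply_ne _ hj.symm]
      · simp
    have hw : τ ^ monWeight lam m = ∏ i, (τ ^ lam i) ^ (cubicExp m i) := by
      rw [monWeight]
      simp only [Fin.sum_univ_four, Fin.prod_univ_four, zpow_add₀ hτ, zpow_mul, zpow_natCast]
    rw [linSub, aeval_monomial, Finsupp.prod_fintype _ _ (fun _ => pow_zero _)]
    simp only [hX, mul_pow, Finset.prod_mul_distrib, ← map_pow]
    rw [← map_prod, ← hw, monomial_eq, Finsupp.prod_fintype _ _ (fun _ => pow_zero _),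
      algebraMap_eq, map_mul]
    ring

/-- Permuting the variables of the cubic permutes the constrained coordinates; `e` is the
permutation of the twenty monomials induced by the permutation `σ` of the variables. -/
theorem HasPoint.perm {k : ℕ} {Z N : Finset (Fin 20)} {r : ℕ}
    (h : HasPoint (nansonMinorsIdeal k) Z N r) (σ : Equiv.Perm (Fin 4)) (e : Equiv.Perm (Fin 20))
    (he : ∀ m i, cubicExp (e m) (σ i) = cubicExp m i) {Z' N' : Finset (Fin 20)}
    (hZ' : Z' = Z.image e) (hN' : N' = N.image e) :
    HasPoint (nansonMinorsIdeal k) Z' N' r := by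
  obtain ⟨K, _, _, g, hI, hZ, hN, s, hs⟩ := h
  refine ⟨K, inferInstance, inferInstance, g ∘ e.symm, ?_, ?_, ?_, e ∘ s, ?_⟩
  · refine minors_vanish_of_linSub (T := (σ.permMatrix K)) ?_ ?_ hI
    · rw [Matrix.det_permutation]
      rcases Int.units_eq_one_or (Equiv.Perm.sign σ) with h | h <;> simp [h]
    · have hX : linSub (σ.permMatrix K) = rename σ := by
        ext1 i
        simp [linSub, Equiv.Perm.permMatrix, PEquiv.toMatrix_apply]
      rw [hX, cubicOf, cubicOf, map_sum]
      simp only [rename_monomial]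
      rw [← Equiv.sum_comp e]
      refine Finset.sum_congr rfl fun m _ => ?_
      have : Finsupp.mapDomain σ (cubicExp m) = cubicExp (e m) := by
        ext i
        obtain ⟨j, rfl⟩ := σ.surjective i
        rw [Finsupp.mapDomain_apply σ.injective, he]
      simp [this]
  · subst hZ'
    intro m hm
    obtain ⟨m', h1, rfl⟩ := Finset.mem_image.mp hm
    simpa using hZ m' h1
  · subst hN'
    intro m hm
    obtain ⟨m', h1, rfl⟩ := Finset.mem_image.mp hm
    simpa using hN m' h1
  · have : (g ∘ e.symm) ∘ e ∘ s = g ∘ s := by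
      funext i
      simp
    rw [this]
    exact hs

/-! ### The kernel of the Nanson matrix -/

/-- The functional on cubic forms with values `v` on the twenty monomials. -/
noncomputable def phi {K : Type*} [Field K] (v : Fin 20 → K) : MvPolynomial (Fin 4) K →ₗ[K] K :=
  ∑ c, v c • lcoeff K (cubicExp c)

/-- The degree-3 monomial with index `m`. -/
noncomputable def mon (K : Type*) [CommRing K] (m : Fin 20) : MvPolynomial (Fin 4) K :=
  X 0 ^ cubicExp m 0 * X 1 ^ cubicExp m 1 * X 2 ^ cubicExp m 2 * X 3 ^ cubicExp m 3

theorem monomial_cubicExp {K : Type*} [CommRing K] (m : Fin 20) (a : K) :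
    monomial (cubicExp m) a = C a * mon K m := by
  rw [monomial_eq, Finsupp.prod_fintype _ _ (fun _ => pow_zero _), Fin.prod_univ_four, mon]

theorem cubicExp_injective : Function.Injective cubicExp := by
  intro a b h
  have h' := DFunLike.congr_fun h
  have key : ∀ a b : Fin 20,
      (![![3,0,0,0], ![2,1,0,0], ![2,0,1,0], ![2,0,0,1],
       ![1,2,0,0], ![1,1,1,0], ![1,1,0,1], ![1,0,2,0], ![1,0,1,1], ![1,0,0,2],
       ![0,3,0,0], ![0,2,1,0], ![0,2,0,1], ![0,1,2,0], ![0,1,1,1], ![0,1,0,2],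
       ![0,0,3,0], ![0,0,2,1], ![0,0,1,2], ![0,0,0,3]] : Fin 20 → Fin 4 → ℕ) a =
      (![![3,0,0,0], ![2,1,0,0], ![2,0,1,0], ![2,0,0,1],
       ![1,2,0,0], ![1,1,1,0], ![1,1,0,1], ![1,0,2,0], ![1,0,1,1], ![1,0,0,2],
       ![0,3,0,0], ![0,2,1,0], ![0,2,0,1], ![0,1,2,0], ![0,1,1,1], ![0,1,0,2],
       ![0,0,3,0], ![0,0,2,1], ![0,0,1,2], ![0,0,0,3]] : Fin 20 → Fin 4 → ℕ) b → a = b := by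
    decide
  exact key a b (funext h')

theorem phi_C_mul_mon {K : Type*} [Field K] (v : Fin 20 → K) (a : K) (m : Fin 20) :
    phi v (C a * mon K m) = a * v m := by
  rw [← monomial_cubicExp, phi, LinearMap.sum_apply, Finset.sum_eq_single m]
  · simp [mul_comm]
  · intro c _ hc
    simp [coeff_monomial, cubicExp_injective.ne hc.symm]
  · simp

/-- `v`, viewed as a functional on cubic forms, kills the twenty Nanson cubics of `F`. -/
def NanKer {K : Type*} [Field K] (F : MvPolynomial (Fin 4) K) (v : Fin 20 → K) : Prop :=
  (∀ i j, phi v (X j * pderiv i F) = 0) ∧ ∀ i, phi v (pderiv i (hess F)) = 0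

theorem nanKer_of_mulVec {K : Type*} [Field K] {g v : Fin 20 → K} (h : (nan g).mulVec v = 0) :
    NanKer (cubicOf g) v := by
  have hle : nanSpan (cubicOf g) ≤ LinearMap.ker (phi v) := by
    refine Submodule.span_le.mpr ?_
    rintro _ ⟨r, rfl⟩
    have : ∑ c, nan g r c * v c = 0 := congrFun h r
    rw [SetLike.mem_coe, LinearMap.mem_ker, phi, LinearMap.sum_apply, ← this]
    exact Finset.sum_congr rfl fun c _ => by simp [nan, nansonMatrix, mul_comm]
  exact ⟨fun i j => hle (X_mul_pderiv_mem _ i j), fun i => hle (pderiv_hess_mem _ i)⟩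

theorem finrank_ker_nan {K : Type*} [Field K] (g : Fin 20 → K) :
    (nan g).rank + Module.finrank K (LinearMap.ker (nan g).mulVecLin) = 20 := by
  have := LinearMap.finrank_range_add_finrank_ker (nan g).mulVecLin
  rwa [Module.finrank_fintype_fun_eq_card, Fintype.card_fin] at this

/-- A kernel of dimension greater than `s` meets every intersection of `s` hyperplanes. -/
theorem le_rank_of_coords {K : Type*} [Field K] {g : Fin 20 → K} {s : ℕ} (f : Fin s → Fin 20)
    (h : ∀ v, NanKer (cubicOf g) v → (∀ i, v (f i) = 0) → v = 0) : 20 ≤ (nan g).rank + s := by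
  by_contra hlt
  have h1 := finrank_ker_nan g
  let L : LinearMap.ker (nan g).mulVecLin →ₗ[K] (Fin s → K) :=
    (LinearMap.funLeft K K f).comp (LinearMap.ker (nan g).mulVecLin).subtype
  have hinj : Function.Injective L := by
    rw [← LinearMap.ker_eq_bot, LinearMap.ker_eq_bot']
    rintro ⟨v, hv⟩ h0
    exact Subtype.ext (h v (nanKer_of_mulVec hv) fun i => congrFun h0 i)
  have h2 := LinearMap.finrank_le_finrank_of_injective hinj
  rw [Module.finrank_fintype_fun_eq_card, Fintype.card_fin] at h2
  omega

/-- If `s` coordinates are injective on a kernel of dimension at least `s`, then they take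
arbitrary values on it. -/
theorem exists_nanKer {K : Type*} [Field K] {g : Fin 20 → K} {s : ℕ} (f : Fin s → Fin 20)
    (h : ∀ v, NanKer (cubicOf g) v → (∀ i, v (f i) = 0) → v = 0) (hs : (nan g).rank + s ≤ 20)
    (u : Fin s → K) : ∃ v, NanKer (cubicOf g) v ∧ ∀ i, v (f i) = u i := by
  have h1 := finrank_ker_nan g
  let L : LinearMap.ker (nan g).mulVecLin →ₗ[K] (Fin s → K) :=
    (LinearMap.funLeft K K f).comp (LinearMap.ker (nan g).mulVecLin).subtype
  have hinj : Function.Injective L := by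
    rw [← LinearMap.ker_eq_bot, LinearMap.ker_eq_bot']
    rintro ⟨v, hv⟩ h0
    exact Subtype.ext (h v (nanKer_of_mulVec hv) fun i => congrFun h0 i)
  have h2 := LinearMap.finrank_le_finrank_of_injective hinj
  have hsurj : Function.Surjective L := by
    refine (LinearMap.injective_iff_surjective_of_finrank_eq_finrank ?_).mp hinj
    rw [Module.finrank_fintype_fun_eq_card, Fintype.card_fin] at h2 ⊢
    omega
  obtain ⟨⟨v, hv⟩, hvu⟩ := hsurj u
  exact ⟨v, nanKer_of_mulVec hv, fun i => congrFun hvu i⟩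

theorem det_fin_four {R : Type*} [CommRing R] (A : Matrix (Fin 4) (Fin 4) R) :
    A.det =
      A 0 0 * (A 1 1 * (A 2 2 * A 3 3 - A 2 3 * A 3 2) - A 1 2 * (A 2 1 * A 3 3 - A 2 3 * A 3 1)
        + A 1 3 * (A 2 1 * A 3 2 - A 2 2 * A 3 1))
      - A 0 1 * (A 1 0 * (A 2 2 * A 3 3 - A 2 3 * A 3 2) - A 1 2 * (A 2 0 * A 3 3 - A 2 3 * A 3 0)
        + A 1 3 * (A 2 0 * A 3 2 - A 2 2 * A 3 0))
      + A 0 2 * (A 1 0 * (A 2 1 * A 3 3 - A 2 3 * A 3 1) - A 1 1 * (A 2 0 * A 3 3 - A 2 3 * A 3 0)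
        + A 1 3 * (A 2 0 * A 3 1 - A 2 1 * A 3 0))
      - A 0 3 * (A 1 0 * (A 2 1 * A 3 2 - A 2 2 * A 3 1) - A 1 1 * (A 2 0 * A 3 2 - A 2 2 * A 3 0)
        + A 1 2 * (A 2 0 * A 3 1 - A 2 1 * A 3 0)) := by
  have h1 : (2 : Fin 3).succ = (3 : Fin 4) := rfl
  have h2 : (2 : Fin 3).castSucc = (2 : Fin 4) := rfl
  rw [Matrix.det_succ_row_zero]
  simp only [Fin.sum_univ_four, Matrix.det_fin_three, Matrix.submatrix_apply]
  norm_num [Fin.succAbove, Fin.lt_def, h1, h2]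
  ring

/-! ### The kernel equations of four families of cubics -/

/-- The exponents of `cubicExp`, as a plain table. -/
def expTab : Fin 20 → Fin 4 → ℕ :=
  ![![3,0,0,0], ![2,1,0,0], ![2,0,1,0], ![2,0,0,1],
    ![1,2,0,0], ![1,1,1,0], ![1,1,0,1], ![1,0,2,0], ![1,0,1,1], ![1,0,0,2],
    ![0,3,0,0], ![0,2,1,0], ![0,2,0,1], ![0,1,2,0], ![0,1,1,1], ![0,1,0,2],
    ![0,0,3,0], ![0,0,2,1], ![0,0,1,2], ![0,0,0,3]]

theorem cubicExp_apply (m : Fin 20) (i : Fin 4) : cubicExp m i = expTab m i := rfl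

/-- Turns the vanishing of the functional `phi v` on `p`, rewritten as an explicit combination `q`
of monomials, into an equation `a = 0` between the entries of `v`. -/
theorem phi_eqn {K : Type*} [Field K] {v : Fin 20 → K} {p q : MvPolynomial (Fin 4) K} {a : K}
    (h : phi v p = 0) (hpq : p = q) (ha : a = phi v q) : a = 0 := by
  rw [ha, ← hpq, h]

theorem pderiv_ofNat {K : Type*} [Field K] (i : Fin 4) (n : ℕ) [n.AtLeastTwo] :
    pderiv i (ofNat(n) : MvPolynomial (Fin 4) K) = 0 := by
  rw [← map_ofNat (C : K →+* MvPolynomial (Fin 4) K) n, pderiv_C]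

theorem C_ofNat {K : Type*} [Field K] (n : ℕ) [n.AtLeastTwo] :
    C (ofNat(n) : K) = (ofNat(n) : MvPolynomial (Fin 4) K) := map_ofNat _ _

theorem mon_table (K : Type*) [Field K] :
    mon K 0 = X 0 ^ 3 ∧
    mon K 1 = X 0 ^ 2 * X 1 ∧
    mon K 2 = X 0 ^ 2 * X 2 ∧
    mon K 3 = X 0 ^ 2 * X 3 ∧
    mon K 4 = X 0 * X 1 ^ 2 ∧
    mon K 5 = X 0 * X 1 * X 2 ∧
    mon K 6 = X 0 * X 1 * X 3 ∧
    mon K 7 = X 0 * X 2 ^ 2 ∧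
    mon K 8 = X 0 * X 2 * X 3 ∧
    mon K 9 = X 0 * X 3 ^ 2 ∧
    mon K 10 = X 1 ^ 3 ∧
    mon K 11 = X 1 ^ 2 * X 2 ∧
    mon K 12 = X 1 ^ 2 * X 3 ∧
    mon K 13 = X 1 * X 2 ^ 2 ∧
    mon K 14 = X 1 * X 2 * X 3 ∧
    mon K 15 = X 1 * X 3 ^ 2 ∧
    mon K 16 = X 2 ^ 3 ∧
    mon K 17 = X 2 ^ 2 * X 3 ∧
    mon K 18 = X 2 * X 3 ^ 2 ∧
    mon K 19 = X 3 ^ 3 := by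
  simp [mon, cubicExp_apply, expTab]

/-- The normal form reached when the coefficients of `x₀²x₃`, `x₀x₂²` and `x₁³` are all nonzero. -/
noncomputable def cubicA {K : Type*} [Field K] (b c d : K) : MvPolynomial (Fin 4) K :=
  X 0 ^ 2 * X 3 + X 0 * X 2 ^ 2 + X 1 ^ 3 + C b * X 1 * X 3 ^ 2 + C d * X 2 ^ 2 * X 3
    + C c * X 2 * X 3 ^ 2

theorem cubicOf_eq_cubicA {K : Type*} [Field K] (b c d : K) :
    cubicOf ![0, 0, 0, 1, 0, 0, 0, 1, 0, 0, 1, 0, 0, 0, 0, b, 0, d, c, 0] = (cubicA b c d) := by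
  simp only [cubicOf, monomial_cubicExp, Fin.sum_univ_succ, mon, cubicExp_apply, cubicA]
  simp [expTab]
  ring

theorem pderiv_cubicA {K : Type*} [Field K] (b c d : K) (i : Fin 4) :
    pderiv i (cubicA b c d) = ![
      2 * X 0 * X 3 + X 2 ^ 2,
      3 * X 1 ^ 2 + C b * X 3 ^ 2,
      2 * X 0 * X 2 + 2 * C d * X 2 * X 3 + C c * X 3 ^ 2,
      X 0 ^ 2 + 2 * C b * X 1 * X 3 + C d * X 2 ^ 2 + 2 * C c * X 2 * X 3] i := by
  fin_cases i <;> simp [cubicA, pderiv_X] <;> ring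

theorem hess_cubicA {K : Type*} [Field K] (b c d : K) :
    hess (cubicA b c d) =
      -48 * X 0 ^ 3 * X 1 - 48 * C d * X 0 ^ 2 * X 1 * X 3 + 48 * C b * X 0 * X 1 ^ 2 * X 3
        + 96 * C d * X 0 * X 1 * X 2 ^ 2 + 144 * C c * X 0 * X 1 * X 2 * X 3
        - 16 * C b ^ 2 * X 0 * X 3 ^ 3 - 48 * C b * X 1 ^ 2 * X 2 ^ 2
        + 48 * C b * C d * X 1 ^ 2 * X 3 ^ 2 - 48 * C c * X 1 * X 2 ^ 3
        - 48 * C d ^ 2 * X 1 * X 2 ^ 2 * X 3 - 48 * C c * C d * X 1 * X 2 * X 3 ^ 2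
        - 48 * C c ^ 2 * X 1 * X 3 ^ 3 + 16 * C b ^ 2 * X 2 ^ 2 * X 3 ^ 2
        - 16 * C b ^ 2 * C d * X 3 ^ 4 := by
  rw [hess, det_fin_four]
  simp only [Matrix.of_apply, pderiv_cubicA]
  simp [pderiv_X, pderiv_ofNat]
  ring

set_option maxHeartbeats 1000000 in
/-- The twenty equations stating that `v` lies in the kernel of the Nanson matrix of `cubicA`. -/
theorem cubicA_eqs {K : Type*} [Field K] (b c d : K) {v : Fin 20 → K}
    (h : NanKer (cubicA b c d) v) :
    2 * v 3 + v 7 = 0 ∧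
    2 * v 6 + v 13 = 0 ∧
    2 * v 8 + v 16 = 0 ∧
    2 * v 9 + v 17 = 0 ∧
    3 * v 4 + b * v 9 = 0 ∧
    3 * v 10 + b * v 15 = 0 ∧
    3 * v 11 + b * v 18 = 0 ∧
    3 * v 12 + b * v 19 = 0 ∧
    2 * v 2 + 2 * d * v 8 + c * v 9 = 0 ∧
    2 * v 5 + 2 * d * v 14 + c * v 15 = 0 ∧
    2 * v 7 + 2 * d * v 17 + c * v 18 = 0 ∧
    2 * v 8 + 2 * d * v 18 + c * v 19 = 0 ∧
    v 0 + 2 * b * v 6 + d * v 7 + 2 * c * v 8 = 0 ∧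
    v 1 + 2 * b * v 12 + d * v 13 + 2 * c * v 14 = 0 ∧
    v 2 + 2 * b * v 14 + d * v 16 + 2 * c * v 17 = 0 ∧
    v 3 + 2 * b * v 15 + d * v 17 + 2 * c * v 18 = 0 ∧
    -144 * v 1 - 96 * d * v 6 + 48 * b * v 12 + 96 * d * v 13 + 144 * c * v 14
      - 16 * b ^ 2 * v 19 = 0 ∧
    -48 * v 0 - 48 * d * v 3 + 96 * b * v 6 + 96 * d * v 7 + 144 * c * v 8 - 96 * b * v 13
      + 96 * b * d * v 15 - 48 * c * v 16 - 48 * d ^ 2 * v 17 - 48 * c * d * v 18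
      - 48 * c ^ 2 * v 19 = 0 ∧
    192 * d * v 5 + 144 * c * v 6 - 96 * b * v 11 - 144 * c * v 13 - 96 * d ^ 2 * v 14
      - 48 * c * d * v 15 + 32 * b ^ 2 * v 18 = 0 ∧
    -48 * d * v 1 + 48 * b * v 4 + 144 * c * v 5 - 48 * b ^ 2 * v 9 + 96 * b * d * v 12
      - 48 * d ^ 2 * v 13 - 96 * c * d * v 14 - 144 * c ^ 2 * v 15 + 32 * b ^ 2 * v 17
      - 64 * b ^ 2 * d * v 19 = 0 := by
  have h1 := h.1
  have h2 := h.2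
  simp only [pderiv_cubicA] at h1
  simp only [hess_cubicA] at h2
  refine ⟨phi_eqn (h1 0 0) (q := C 2 * mon K 3 + C 1 * mon K 7) ?_ ?_,
    phi_eqn (h1 0 1) (q := C 2 * mon K 6 + C 1 * mon K 13) ?_ ?_,
    phi_eqn (h1 0 2) (q := C 2 * mon K 8 + C 1 * mon K 16) ?_ ?_,
    phi_eqn (h1 0 3) (q := C 2 * mon K 9 + C 1 * mon K 17) ?_ ?_,
    phi_eqn (h1 1 0) (q := C 3 * mon K 4 + C b * mon K 9) ?_ ?_,
    phi_eqn (h1 1 1) (q := C 3 * mon K 10 + C b * mon K 15) ?_ ?_,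
    phi_eqn (h1 1 2) (q := C 3 * mon K 11 + C b * mon K 18) ?_ ?_,
    phi_eqn (h1 1 3) (q := C 3 * mon K 12 + C b * mon K 19) ?_ ?_,
    phi_eqn (h1 2 0) (q := C 2 * mon K 2 + C (2 * d) * mon K 8
      + C c * mon K 9) ?_ ?_,
    phi_eqn (h1 2 1) (q := C 2 * mon K 5 + C (2 * d) * mon K 14
      + C c * mon K 15) ?_ ?_,
    phi_eqn (h1 2 2) (q := C 2 * mon K 7 + C (2 * d) * mon K 17
      + C c * mon K 18) ?_ ?_,
    phi_eqn (h1 2 3) (q := C 2 * mon K 8 + C (2 * d) * mon K 18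
      + C c * mon K 19) ?_ ?_,
    phi_eqn (h1 3 0) (q := C 1 * mon K 0 + C (2 * b) * mon K 6 + C d * mon K 7
      + C (2 * c) * mon K 8) ?_ ?_,
    phi_eqn (h1 3 1) (q := C 1 * mon K 1 + C (2 * b) * mon K 12 + C d * mon K 13
      + C (2 * c) * mon K 14) ?_ ?_,
    phi_eqn (h1 3 2) (q := C 1 * mon K 2 + C (2 * b) * mon K 14 + C d * mon K 16
      + C (2 * c) * mon K 17) ?_ ?_,
    phi_eqn (h1 3 3) (q := C 1 * mon K 3 + C (2 * b) * mon K 15 + C d * mon K 17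
      + C (2 * c) * mon K 18) ?_ ?_,
    phi_eqn (h2 0) (q := C (-144) * mon K 1 + C (-96 * d) * mon K 6
      + C (48 * b) * mon K 12 + C (96 * d) * mon K 13 + C (144 * c) * mon K 14
      + C (-16 * b ^ 2) * mon K 19) ?_ ?_,
    phi_eqn (h2 1) (q := C (-48) * mon K 0 + C (-48 * d) * mon K 3
      + C (96 * b) * mon K 6 + C (96 * d) * mon K 7 + C (144 * c) * mon K 8
      + C (-96 * b) * mon K 13 + C (96 * b * d) * mon K 15 + C (-48 * c) * mon K 16
      + C (-48 * d ^ 2) * mon K 17 + C (-48 * c * d) * mon K 18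
      + C (-48 * c ^ 2) * mon K 19) ?_ ?_,
    phi_eqn (h2 2) (q := C (192 * d) * mon K 5 + C (144 * c) * mon K 6
      + C (-96 * b) * mon K 11 + C (-144 * c) * mon K 13 + C (-96 * d ^ 2) * mon K 14
      + C (-48 * c * d) * mon K 15 + C (32 * b ^ 2) * mon K 18) ?_ ?_,
    phi_eqn (h2 3) (q := C (-48 * d) * mon K 1 + C (48 * b) * mon K 4
      + C (144 * c) * mon K 5 + C (-48 * b ^ 2) * mon K 9 + C (96 * b * d) * mon K 12
      + C (-48 * d ^ 2) * mon K 13 + C (-96 * c * d) * mon K 14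
      + C (-144 * c ^ 2) * mon K 15 + C (32 * b ^ 2) * mon K 17
      + C (-64 * b ^ 2 * d) * mon K 19) ?_ ?_⟩
  all_goals first
    | simp only [map_add, phi_C_mul_mon]; ring1
    | simp [mon_table, pderiv_X, pderiv_ofNat, C_ofNat]; done
    | simp [mon_table, pderiv_X, pderiv_ofNat, C_ofNat]; ring1
    | simp only [map_add, phi_C_mul_mon]

/-- The normal form reached when there is no term `x₁³`, but the coefficients of `x₀²x₃`, `x₀x₂²`
and `x₁²x₂` are nonzero. -/
noncomputable def cubicB {K : Type*} [Field K] (b a : K) : MvPolynomial (Fin 4) K :=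
  X 0 ^ 2 * X 3 + X 0 * X 2 ^ 2 + X 1 ^ 2 * X 2 + C b * X 1 * X 3 ^ 2 + C a * X 3 ^ 3

theorem cubicOf_eq_cubicB {K : Type*} [Field K] (b a : K) :
    cubicOf ![0, 0, 0, 1, 0, 0, 0, 1, 0, 0, 0, 1, 0, 0, 0, b, 0, 0, 0, a] = (cubicB b a) := by
  simp only [cubicOf, monomial_cubicExp, Fin.sum_univ_succ, mon, cubicExp_apply, cubicB]
  simp [expTab]
  ring

theorem pderiv_cubicB {K : Type*} [Field K] (b a : K) (i : Fin 4) :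
    pderiv i (cubicB b a) = ![
      2 * X 0 * X 3 + X 2 ^ 2,
      2 * X 1 * X 2 + C b * X 3 ^ 2,
      2 * X 0 * X 2 + X 1 ^ 2,
      X 0 ^ 2 + 2 * C b * X 1 * X 3 + 3 * C a * X 3 ^ 2] i := by
  fin_cases i <;> simp [cubicB, pderiv_X] <;> ring

theorem hess_cubicB {K : Type*} [Field K] (b a : K) :
    hess (cubicB b a) =
      -16 * X 0 ^ 3 * X 2 + 16 * X 0 ^ 2 * X 1 ^ 2 - 16 * C b * X 0 * X 1 * X 2 * X 3
        + 48 * C a * X 0 * X 2 * X 3 ^ 2 - 16 * C b ^ 2 * X 0 * X 3 ^ 3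
        - 16 * C b * X 1 ^ 3 * X 3 - 48 * C a * X 1 ^ 2 * X 3 ^ 2 - 16 * C b * X 1 * X 2 ^ 3
        - 48 * C a * X 2 ^ 3 * X 3 + 16 * C b ^ 2 * X 2 ^ 2 * X 3 ^ 2 := by
  rw [hess, det_fin_four]
  simp only [Matrix.of_apply, pderiv_cubicB]
  simp [pderiv_X, pderiv_ofNat]
  ring

set_option maxHeartbeats 1000000 in
/-- The twenty equations stating that `v` lies in the kernel of the Nanson matrix of `cubicB`. -/
theorem cubicB_eqs {K : Type*} [Field K] (b a : K) {v : Fin 20 → K}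
    (h : NanKer (cubicB b a) v) :
    2 * v 3 + v 7 = 0 ∧
    2 * v 6 + v 13 = 0 ∧
    2 * v 8 + v 16 = 0 ∧
    2 * v 9 + v 17 = 0 ∧
    2 * v 5 + b * v 9 = 0 ∧
    2 * v 11 + b * v 15 = 0 ∧
    2 * v 13 + b * v 18 = 0 ∧
    2 * v 14 + b * v 19 = 0 ∧
    2 * v 2 + v 4 = 0 ∧
    2 * v 5 + v 10 = 0 ∧
    2 * v 7 + v 11 = 0 ∧
    2 * v 8 + v 12 = 0 ∧
    v 0 + 2 * b * v 6 + 3 * a * v 9 = 0 ∧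
    v 1 + 2 * b * v 12 + 3 * a * v 15 = 0 ∧
    v 2 + 2 * b * v 14 + 3 * a * v 18 = 0 ∧
    v 3 + 2 * b * v 15 + 3 * a * v 19 = 0 ∧
    -48 * v 2 + 32 * v 4 - 16 * b * v 14 + 48 * a * v 18 - 16 * b ^ 2 * v 19 = 0 ∧
    32 * v 1 - 16 * b * v 8 - 48 * b * v 12 - 96 * a * v 15 - 16 * b * v 16 = 0 ∧
    -16 * v 0 - 16 * b * v 6 + 48 * a * v 9 - 48 * b * v 13 - 144 * a * v 17
      + 32 * b ^ 2 * v 18 = 0 ∧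
    -16 * b * v 5 + 96 * a * v 8 - 48 * b ^ 2 * v 9 - 16 * b * v 10 - 96 * a * v 12
      - 48 * a * v 16 + 32 * b ^ 2 * v 17 = 0 := by
  have h1 := h.1
  have h2 := h.2
  simp only [pderiv_cubicB] at h1
  simp only [hess_cubicB] at h2
  refine ⟨phi_eqn (h1 0 0) (q := C 2 * mon K 3 + C 1 * mon K 7) ?_ ?_,
    phi_eqn (h1 0 1) (q := C 2 * mon K 6 + C 1 * mon K 13) ?_ ?_,
    phi_eqn (h1 0 2) (q := C 2 * mon K 8 + C 1 * mon K 16) ?_ ?_,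
    phi_eqn (h1 0 3) (q := C 2 * mon K 9 + C 1 * mon K 17) ?_ ?_,
    phi_eqn (h1 1 0) (q := C 2 * mon K 5 + C b * mon K 9) ?_ ?_,
    phi_eqn (h1 1 1) (q := C 2 * mon K 11 + C b * mon K 15) ?_ ?_,
    phi_eqn (h1 1 2) (q := C 2 * mon K 13 + C b * mon K 18) ?_ ?_,
    phi_eqn (h1 1 3) (q := C 2 * mon K 14 + C b * mon K 19) ?_ ?_,
    phi_eqn (h1 2 0) (q := C 2 * mon K 2 + C 1 * mon K 4) ?_ ?_,
    phi_eqn (h1 2 1) (q := C 2 * mon K 5 + C 1 * mon K 10) ?_ ?_,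
    phi_eqn (h1 2 2) (q := C 2 * mon K 7 + C 1 * mon K 11) ?_ ?_,
    phi_eqn (h1 2 3) (q := C 2 * mon K 8 + C 1 * mon K 12) ?_ ?_,
    phi_eqn (h1 3 0) (q := C 1 * mon K 0 + C (2 * b) * mon K 6
      + C (3 * a) * mon K 9) ?_ ?_,
    phi_eqn (h1 3 1) (q := C 1 * mon K 1 + C (2 * b) * mon K 12
      + C (3 * a) * mon K 15) ?_ ?_,
    phi_eqn (h1 3 2) (q := C 1 * mon K 2 + C (2 * b) * mon K 14
      + C (3 * a) * mon K 18) ?_ ?_,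
    phi_eqn (h1 3 3) (q := C 1 * mon K 3 + C (2 * b) * mon K 15
      + C (3 * a) * mon K 19) ?_ ?_,
    phi_eqn (h2 0) (q := C (-48) * mon K 2 + C 32 * mon K 4 + C (-16 * b) * mon K 14
      + C (48 * a) * mon K 18 + C (-16 * b ^ 2) * mon K 19) ?_ ?_,
    phi_eqn (h2 1) (q := C 32 * mon K 1 + C (-16 * b) * mon K 8
      + C (-48 * b) * mon K 12 + C (-96 * a) * mon K 15 + C (-16 * b) * mon K 16) ?_ ?_,
    phi_eqn (h2 2) (q := C (-16) * mon K 0 + C (-16 * b) * mon K 6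
      + C (48 * a) * mon K 9 + C (-48 * b) * mon K 13 + C (-144 * a) * mon K 17
      + C (32 * b ^ 2) * mon K 18) ?_ ?_,
    phi_eqn (h2 3) (q := C (-16 * b) * mon K 5 + C (96 * a) * mon K 8
      + C (-48 * b ^ 2) * mon K 9 + C (-16 * b) * mon K 10 + C (-96 * a) * mon K 12
      + C (-48 * a) * mon K 16 + C (32 * b ^ 2) * mon K 17) ?_ ?_⟩
  all_goals first
    | simp only [map_add, phi_C_mul_mon]; ring1
    | simp [mon_table, pderiv_X, pderiv_ofNat, C_ofNat]; done
    | simp [mon_table, pderiv_X, pderiv_ofNat, C_ofNat]; ring1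
    | simp only [map_add, phi_C_mul_mon]

/-- A representative of the cubics with terms `x₀²x₃` and `x₀x₂²`, but without `x₁³` and `x₁²x₂`. -/
noncomputable def cubicC {K : Type*} [Field K] : MvPolynomial (Fin 4) K :=
  X 0 ^ 2 * X 3 + X 0 * X 2 ^ 2 + X 1 ^ 2 * X 3 + X 3 ^ 3

theorem cubicOf_eq_cubicC {K : Type*} [Field K] :
    cubicOf ![0, 0, 0, 1, 0, 0, 0, 1, 0, 0, 0, 0, 1, 0, 0, 0, 0, 0, 0, 1]
      = (cubicC : MvPolynomial (Fin 4) K) := by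
  simp only [cubicOf, monomial_cubicExp, Fin.sum_univ_succ, mon, cubicExp_apply, cubicC]
  simp [expTab]
  ring

theorem pderiv_cubicC {K : Type*} [Field K] (i : Fin 4) :
    pderiv i (cubicC : MvPolynomial (Fin 4) K) = ![
      2 * X 0 * X 3 + X 2 ^ 2,
      2 * X 1 * X 3,
      2 * X 0 * X 2,
      X 0 ^ 2 + X 1 ^ 2 + 3 * X 3 ^ 2] i := by
  fin_cases i <;> simp [cubicC, pderiv_X] <;> ring

theorem hess_cubicC {K : Type*} [Field K] :
    hess (cubicC : MvPolynomial (Fin 4) K) =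
      -16 * X 0 ^ 3 * X 3 - 16 * X 0 * X 1 ^ 2 * X 3 + 48 * X 0 * X 3 ^ 3
        + 16 * X 1 ^ 2 * X 2 ^ 2 - 48 * X 2 ^ 2 * X 3 ^ 2 := by
  rw [hess, det_fin_four]
  simp only [Matrix.of_apply, pderiv_cubicC]
  simp [pderiv_X, pderiv_ofNat]
  ring

set_option maxHeartbeats 1000000 in
/-- The twenty equations stating that `v` lies in the kernel of the Nanson matrix of `cubicC`. -/
theorem cubicC_eqs {K : Type*} [Field K] {v : Fin 20 → K}
    (h : NanKer (cubicC : MvPolynomial (Fin 4) K) v) :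
    2 * v 3 + v 7 = 0 ∧
    2 * v 6 + v 13 = 0 ∧
    2 * v 8 + v 16 = 0 ∧
    2 * v 9 + v 17 = 0 ∧
    2 * v 6 = 0 ∧
    2 * v 12 = 0 ∧
    2 * v 14 = 0 ∧
    2 * v 15 = 0 ∧
    2 * v 2 = 0 ∧
    2 * v 5 = 0 ∧
    2 * v 7 = 0 ∧
    2 * v 8 = 0 ∧
    v 0 + v 4 + 3 * v 9 = 0 ∧
    v 1 + v 10 + 3 * v 15 = 0 ∧
    v 2 + v 11 + 3 * v 18 = 0 ∧
    v 3 + v 12 + 3 * v 19 = 0 ∧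
    -48 * v 3 - 16 * v 12 + 48 * v 19 = 0 ∧
    -32 * v 6 + 32 * v 13 = 0 ∧
    32 * v 11 - 96 * v 18 = 0 ∧
    -16 * v 0 - 16 * v 4 + 144 * v 9 - 96 * v 17 = 0 := by
  have h1 := h.1
  have h2 := h.2
  simp only [pderiv_cubicC] at h1
  simp only [hess_cubicC] at h2
  refine ⟨phi_eqn (h1 0 0) (q := C 2 * mon K 3 + C 1 * mon K 7) ?_ ?_,
    phi_eqn (h1 0 1) (q := C 2 * mon K 6 + C 1 * mon K 13) ?_ ?_,
    phi_eqn (h1 0 2) (q := C 2 * mon K 8 + C 1 * mon K 16) ?_ ?_,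
    phi_eqn (h1 0 3) (q := C 2 * mon K 9 + C 1 * mon K 17) ?_ ?_,
    phi_eqn (h1 1 0) (q := C 2 * mon K 6) ?_ ?_,
    phi_eqn (h1 1 1) (q := C 2 * mon K 12) ?_ ?_,
    phi_eqn (h1 1 2) (q := C 2 * mon K 14) ?_ ?_,
    phi_eqn (h1 1 3) (q := C 2 * mon K 15) ?_ ?_,
    phi_eqn (h1 2 0) (q := C 2 * mon K 2) ?_ ?_,
    phi_eqn (h1 2 1) (q := C 2 * mon K 5) ?_ ?_,
    phi_eqn (h1 2 2) (q := C 2 * mon K 7) ?_ ?_,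
    phi_eqn (h1 2 3) (q := C 2 * mon K 8) ?_ ?_,
    phi_eqn (h1 3 0) (q := C 1 * mon K 0 + C 1 * mon K 4 + C 3 * mon K 9) ?_ ?_,
    phi_eqn (h1 3 1) (q := C 1 * mon K 1 + C 1 * mon K 10 + C 3 * mon K 15) ?_ ?_,
    phi_eqn (h1 3 2) (q := C 1 * mon K 2 + C 1 * mon K 11 + C 3 * mon K 18) ?_ ?_,
    phi_eqn (h1 3 3) (q := C 1 * mon K 3 + C 1 * mon K 12 + C 3 * mon K 19) ?_ ?_,
    phi_eqn (h2 0) (q := C (-48) * mon K 3 + C (-16) * mon K 12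
      + C 48 * mon K 19) ?_ ?_,
    phi_eqn (h2 1) (q := C (-32) * mon K 6 + C 32 * mon K 13) ?_ ?_,
    phi_eqn (h2 2) (q := C 32 * mon K 11 + C (-96) * mon K 18) ?_ ?_,
    phi_eqn (h2 3) (q := C (-16) * mon K 0 + C (-16) * mon K 4 + C 144 * mon K 9
      + C (-96) * mon K 17) ?_ ?_⟩
  all_goals first
    | simp only [map_add, phi_C_mul_mon]; ring1
    | simp [mon_table, pderiv_X, pderiv_ofNat, C_ofNat]; done
    | simp [mon_table, pderiv_X, pderiv_ofNat, C_ofNat]; ring1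
    | simp only [map_add, phi_C_mul_mon]

/-- A cubic with invertible Nanson matrix in which `x₀` occurs only in the term `x₀²x₃`. -/
noncomputable def cubicD {K : Type*} [Field K] : MvPolynomial (Fin 4) K :=
  X 0 ^ 2 * X 3 + X 1 ^ 3 + X 2 ^ 3 + X 3 ^ 3

theorem cubicOf_eq_cubicD {K : Type*} [Field K] :
    cubicOf ![0, 0, 0, 1, 0, 0, 0, 0, 0, 0, 1, 0, 0, 0, 0, 0, 1, 0, 0, 1]
      = (cubicD : MvPolynomial (Fin 4) K) := by
  simp only [cubicOf, monomial_cubicExp, Fin.sum_univ_succ, mon, cubicExp_apply, cubicD]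
  simp [expTab]
  ring

theorem pderiv_cubicD {K : Type*} [Field K] (i : Fin 4) :
    pderiv i (cubicD : MvPolynomial (Fin 4) K) = ![
      2 * X 0 * X 3,
      3 * X 1 ^ 2,
      3 * X 2 ^ 2,
      X 0 ^ 2 + 3 * X 3 ^ 2] i := by
  fin_cases i <;> simp [cubicD, pderiv_X] <;> ring

theorem hess_cubicD {K : Type*} [Field K] :
    hess (cubicD : MvPolynomial (Fin 4) K) =
      -144 * X 0 ^ 2 * X 1 * X 2 + 432 * X 1 * X 2 * X 3 ^ 2 := by
  rw [hess, det_fin_four]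
  simp only [Matrix.of_apply, pderiv_cubicD]
  simp [pderiv_X, pderiv_ofNat]
  ring

set_option maxHeartbeats 1000000 in
/-- The twenty equations stating that `v` lies in the kernel of the Nanson matrix of `cubicD`. -/
theorem cubicD_eqs {K : Type*} [Field K] {v : Fin 20 → K}
    (h : NanKer (cubicD : MvPolynomial (Fin 4) K) v) :
    2 * v 3 = 0 ∧
    2 * v 6 = 0 ∧
    2 * v 8 = 0 ∧
    2 * v 9 = 0 ∧
    3 * v 4 = 0 ∧
    3 * v 10 = 0 ∧
    3 * v 11 = 0 ∧
    3 * v 12 = 0 ∧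
    3 * v 7 = 0 ∧
    3 * v 13 = 0 ∧
    3 * v 16 = 0 ∧
    3 * v 17 = 0 ∧
    v 0 + 3 * v 9 = 0 ∧
    v 1 + 3 * v 15 = 0 ∧
    v 2 + 3 * v 18 = 0 ∧
    v 3 + 3 * v 19 = 0 ∧
    -288 * v 5 = 0 ∧
    -144 * v 2 + 432 * v 18 = 0 ∧
    -144 * v 1 + 432 * v 15 = 0 ∧
    864 * v 14 = 0 := by
  have h1 := h.1
  have h2 := h.2
  simp only [pderiv_cubicD] at h1
  simp only [hess_cubicD] at h2
  refine ⟨phi_eqn (h1 0 0) (q := C 2 * mon K 3) ?_ ?_,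
    phi_eqn (h1 0 1) (q := C 2 * mon K 6) ?_ ?_,
    phi_eqn (h1 0 2) (q := C 2 * mon K 8) ?_ ?_,
    phi_eqn (h1 0 3) (q := C 2 * mon K 9) ?_ ?_,
    phi_eqn (h1 1 0) (q := C 3 * mon K 4) ?_ ?_,
    phi_eqn (h1 1 1) (q := C 3 * mon K 10) ?_ ?_,
    phi_eqn (h1 1 2) (q := C 3 * mon K 11) ?_ ?_,
    phi_eqn (h1 1 3) (q := C 3 * mon K 12) ?_ ?_,
    phi_eqn (h1 2 0) (q := C 3 * mon K 7) ?_ ?_,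
    phi_eqn (h1 2 1) (q := C 3 * mon K 13) ?_ ?_,
    phi_eqn (h1 2 2) (q := C 3 * mon K 16) ?_ ?_,
    phi_eqn (h1 2 3) (q := C 3 * mon K 17) ?_ ?_,
    phi_eqn (h1 3 0) (q := C 1 * mon K 0 + C 3 * mon K 9) ?_ ?_,
    phi_eqn (h1 3 1) (q := C 1 * mon K 1 + C 3 * mon K 15) ?_ ?_,
    phi_eqn (h1 3 2) (q := C 1 * mon K 2 + C 3 * mon K 18) ?_ ?_,
    phi_eqn (h1 3 3) (q := C 1 * mon K 3 + C 3 * mon K 19) ?_ ?_,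
    phi_eqn (h2 0) (q := C (-288) * mon K 5) ?_ ?_,
    phi_eqn (h2 1) (q := C (-144) * mon K 2 + C 432 * mon K 18) ?_ ?_,
    phi_eqn (h2 2) (q := C (-144) * mon K 1 + C 432 * mon K 15) ?_ ?_,
    phi_eqn (h2 3) (q := C 864 * mon K 14) ?_ ?_⟩
  all_goals first
    | simp only [map_add, phi_C_mul_mon]; ring1
    | simp [mon_table, pderiv_X, pderiv_ofNat, C_ofNat]; done
    | simp [mon_table, pderiv_X, pderiv_ofNat, C_ofNat]; ring1
    | simp only [map_add, phi_C_mul_mon]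

/-! ### The ranks of the four families -/

/-- Nanson's equations for `cubicA`, reduced to six equations in six unknowns; the other fourteen
coordinates of a kernel vector are determined by these six. -/
theorem cubicA_red {K : Type*} [Field K] [CharZero K] {b c d : K} {v : Fin 20 → K}
    (h : NanKer (cubicA b c d) v) :
    (8 * b * v 14 + 9 * c * v 17 + 12 * d ^ 2 * v 18 + 6 * c * d * v 19 = 0 ∧
    8 * b * v 15 + 6 * d * v 17 + 9 * c * v 18 = 0 ∧
    27 * c * v 14 - 8 * b ^ 2 * v 19 - 36 * d * v 6 = 0 ∧
    8 * b * d * v 15 - 18 * d ^ 2 * v 17 - 39 * c * d * v 18 - 18 * c ^ 2 * v 19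
      + 32 * b * v 6 = 0 ∧
    18 * d ^ 2 * v 14 + 9 * c * d * v 15 - 4 * b ^ 2 * v 18 - 27 * c * v 6 = 0 ∧
    18 * c * d * v 14 + 27 * c ^ 2 * v 15 - 8 * b ^ 2 * v 17 + 16 * b ^ 2 * d * v 19 = 0) ∧
    (v 6 = 0 → v 14 = 0 → v 15 = 0 → v 17 = 0 → v 18 = 0 → v 19 = 0 → v = 0) := by
  obtain ⟨e0, e1, e2, e3, e4, e5, e6, e7, e8, e9, e10, e11, e12, e13, e14, e15, j0, j1, j2, j3⟩ :=
    cubicA_eqs b c d h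
  refine ⟨⟨?_, ?_, ?_, ?_, ?_, ?_⟩, ?_⟩
  · linear_combination 4 * e14 - 2 * e8 - 4 * d * e2 + c * e3 + 6 * d * e11
  · linear_combination 4 * e15 - 2 * e0 + e10
  · linear_combination 1 / 16 * j0 + 9 * e13 - 7 * b * e7 - 15 * d * e1
  · linear_combination 1 / 12 * j1 + 4 * e12 + 2 * d * e0 - 7 * d * e10 + 4 * c * e2 + 8 * b * e1
      - 14 * c * e11
  · linear_combination -1 / 16 * j2 + 6 * d * e9 - 2 * b * e6 - 9 * c * e1
  · linear_combination -1 / 8 * j3 - 6 * d * e13 + 2 * b * e4 + 9 * c * e9 - 4 * b ^ 2 * e3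
      + 8 * b * d * e7
  · intro h6 h14 h15 h17 h18 h19
    have h0 : v 0 = 0 := by
      linear_combination e12 + (-1/2 * d) * e10 + (-1 * c) * e11 - (2 * b) * h6
        - (-1 * d ^ 2) * h17 - (-5/2 * c * d) * h18 - (-1 * c ^ 2) * h19
    have h1 : v 1 = 0 := by
      linear_combination e13 + (-2/3 * b) * e7 + (-1 * d) * e1
        - (-2 * d) * h6 - (2 * c) * h14 - (-2/3 * b ^ 2) * h19
    have h2 : v 2 = 0 := by
      linear_combination (1/2) * e8 + (-1/4 * c) * e3 + (-1/2 * d) * e11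
        - (-1/4 * c) * h17 - (-1 * d ^ 2) * h18 - (-1/2 * c * d) * h19
    have h3 : v 3 = 0 := by
      linear_combination (1/2) * e0 + (-1/4) * e10 - (-1/2 * d) * h17 - (-1/4 * c) * h18
    have h4 : v 4 = 0 := by linear_combination (1/3) * e4 + (-1/6 * b) * e3 - (-1/6 * b) * h17
    have h5 : v 5 = 0 := by linear_combination (1/2) * e9 - (d) * h14 - (1/2 * c) * h15
    have h7 : v 7 = 0 := by linear_combination (1/2) * e10 - (d) * h17 - (1/2 * c) * h18
    have h8 : v 8 = 0 := by linear_combination (1/2) * e11 - (d) * h18 - (1/2 * c) * h19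
    have h9 : v 9 = 0 := by linear_combination (1/2) * e3 - (1/2) * h17
    have h10 : v 10 = 0 := by linear_combination (1/3) * e5 - (1/3 * b) * h15
    have h11 : v 11 = 0 := by linear_combination (1/3) * e6 - (1/3 * b) * h18
    have h12 : v 12 = 0 := by linear_combination (1/3) * e7 - (1/3 * b) * h19
    have h13 : v 13 = 0 := by linear_combination e1 - (2) * h6
    have h16 : v 16 = 0 := by linear_combination (-1) * e11 + e2 - (-2 * d) * h18 - (-1 * c) * h19
    funext i
    fin_cases i <;> assumption

/-- The reduced form of Nanson's equations for `cubicB`. -/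
theorem cubicB_red {K : Type*} [Field K] [CharZero K] {b a : K} {v : Fin 20 → K}
    (h : NanKer (cubicB b a) v) :
    (5 * b * v 15 + 8 * a * v 19 = 0 ∧
    16 * a * v 18 - 5 * b ^ 2 * v 19 = 0 ∧
    8 * a * v 15 + 5 * b * v 16 = 0 ∧
    16 * a * v 17 - 5 * b ^ 2 * v 18 = 0 ∧
    16 * a * v 16 - 5 * b ^ 2 * v 17 = 0) ∧
    (v 15 = 0 → v 16 = 0 → v 17 = 0 → v 18 = 0 → v 19 = 0 → v = 0) := by
  obtain ⟨e0, e1, e2, e3, e4, e5, e6, e7, e8, e9, e10, e11, e12, e13, e14, e15, j0, j1, j2, j3⟩ :=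
    cubicB_eqs b a h
  refine ⟨⟨?_, ?_, ?_, ?_, ?_⟩, ?_⟩
  · linear_combination 8 / 3 * e15 - 4 / 3 * e0 + 2 / 3 * e10 - 1 / 3 * e5
  · linear_combination 1 / 24 * (j0 - 32 * e8 + 112 * e14 - 104 * b * e7)
  · linear_combination -1 / 24 * (j1 - 32 * e13 - 104 * b * e2 + 112 * b * e11)
  · linear_combination -1 / 12 * (j2 + 16 * e12 - 8 * b * e1 - 48 * a * e3 + 28 * b * e6)
  · linear_combination -1 / 12 * (j3 - 8 * b * e4 - 144 * a * e2 + 28 * b ^ 2 * e3 + 16 * b * e9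
      + 96 * a * e11)
  · intro h15 h16 h17 h18 h19
    have h0 : v 0 = 0 := by
      linear_combination e12 + (-1 * b) * e1 + (-3/2 * a) * e3 + (1/2 * b) * e6
        - (-3/2 * a) * h17 - (1/2 * b ^ 2) * h18
    have h1 : v 1 = 0 := by
      linear_combination e13 + (-2 * b) * e11 + (2 * b) * e2 - (3 * a) * h15 - (2 * b) * h16
    have h2 : v 2 = 0 := by
      linear_combination e14 + (-1 * b) * e7 - (3 * a) * h18 - (-1 * b ^ 2) * h19
    have h3 : v 3 = 0 := by
      linear_combination (1/2) * e0 + (-1/4) * e10 + (1/8) * e5 - (1/8 * b) * h15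
    have h4 : v 4 = 0 := by
      linear_combination (-2) * e14 + e8 + (2 * b) * e7 - (-6 * a) * h18 - (2 * b ^ 2) * h19
    have h5 : v 5 = 0 := by linear_combination (1/2) * e4 + (-1/4 * b) * e3 - (-1/4 * b) * h17
    have h6 : v 6 = 0 := by linear_combination (1/2) * e1 + (-1/4) * e6 - (-1/4 * b) * h18
    have h7 : v 7 = 0 := by linear_combination (1/2) * e10 + (-1/4) * e5 - (-1/4 * b) * h15
    have h8 : v 8 = 0 := by linear_combination (1/2) * e2 - (1/2) * h16
    have h9 : v 9 = 0 := by linear_combination (1/2) * e3 - (1/2) * h17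
    have h10 : v 10 = 0 := by linear_combination e9 - e4 + (1/2 * b) * e3 - (1/2 * b) * h17
    have h11 : v 11 = 0 := by linear_combination (1/2) * e5 - (1/2 * b) * h15
    have h12 : v 12 = 0 := by linear_combination e11 - e2 - (-1) * h16
    have h13 : v 13 = 0 := by linear_combination (1/2) * e6 - (1/2 * b) * h18
    have h14 : v 14 = 0 := by linear_combination (1/2) * e7 - (1/2 * b) * h19
    funext i
    fin_cases i <;> assumption

theorem cubicC_red {K : Type*} [Field K] [CharZero K] {v : Fin 20 → K}
    (h : NanKer (cubicC : MvPolynomial (Fin 4) K) v) (h4 : v 4 = 0) (h10 : v 10 = 0) : v = 0 := by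
  obtain ⟨e0, e1, e2, e3, e4, e5, e6, e7, e8, e9, e10, e11, e12, e13, e14, e15, j0, j1, j2, j3⟩ :=
    cubicC_eqs h
  have h0 : v 0 = 0 := by linear_combination (7/8) * e12 + (-3/4) * e3 + (-1/128) * j3 - h4
  have h1 : v 1 = 0 := by linear_combination e13 + (-3/2) * e7 - h10
  have h2 : v 2 = 0 := by linear_combination (1/2) * e8
  have h3 : v 3 = 0 := by linear_combination (1/2) * e0 + (-1/4) * e10
  have h5 : v 5 = 0 := by linear_combination (1/2) * e9
  have h6 : v 6 = 0 := by linear_combination (1/2) * e4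
  have h7 : v 7 = 0 := by linear_combination (1/2) * e10
  have h8 : v 8 = 0 := by linear_combination (1/2) * e11
  have h9 : v 9 = 0 := by linear_combination (1/4) * e3 + (1/384) * j3 + (1/24) * e12
  have h11 : v 11 = 0 := by linear_combination (1/2) * e14 + (-1/4) * e8 + (1/64) * j2
  have h12 : v 12 = 0 := by linear_combination (1/2) * e5
  have h13 : v 13 = 0 := by linear_combination (-1) * e4 + e1
  have h14 : v 14 = 0 := by linear_combination (1/2) * e6
  have h15 : v 15 = 0 := by linear_combination (1/2) * e7
  have h16 : v 16 = 0 := by linear_combination (-1) * e11 + e2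
  have h17 : v 17 = 0 := by linear_combination (-1/192) * j3 + (-1/12) * e12 + (1/2) * e3
  have h18 : v 18 = 0 := by linear_combination (-1/192) * j2 + (1/6) * e14 + (-1/12) * e8
  have h19 : v 19 = 0 := by
    linear_combination (1/3) * e15 + (-1/6) * e0 + (1/12) * e10 + (-1/6) * e5
  funext i
  fin_cases i <;> assumption

theorem cubicD_red {K : Type*} [Field K] [CharZero K] {v : Fin 20 → K}
    (h : NanKer (cubicD : MvPolynomial (Fin 4) K) v) : v = 0 := by
  obtain ⟨e0, e1, e2, e3, e4, e5, e6, e7, e8, e9, e10, e11, e12, e13, e14, e15, j0, j1, j2, j3⟩ :=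
    cubicD_eqs h
  have h0 : v 0 = 0 := by linear_combination e12 + (-3/2) * e3
  have h1 : v 1 = 0 := by linear_combination (1/2) * e13 + (-1/288) * j2
  have h2 : v 2 = 0 := by linear_combination (1/2) * e14 + (-1/288) * j1
  have h3 : v 3 = 0 := by linear_combination (1/2) * e0
  have h4 : v 4 = 0 := by linear_combination (1/3) * e4
  have h5 : v 5 = 0 := by linear_combination (-1/288) * j0
  have h6 : v 6 = 0 := by linear_combination (1/2) * e1
  have h7 : v 7 = 0 := by linear_combination (1/3) * e8
  have h8 : v 8 = 0 := by linear_combination (1/2) * e2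
  have h9 : v 9 = 0 := by linear_combination (1/2) * e3
  have h10 : v 10 = 0 := by linear_combination (1/3) * e5
  have h11 : v 11 = 0 := by linear_combination (1/3) * e6
  have h12 : v 12 = 0 := by linear_combination (1/3) * e7
  have h13 : v 13 = 0 := by linear_combination (1/3) * e9
  have h14 : v 14 = 0 := by linear_combination (1/864) * j3
  have h15 : v 15 = 0 := by linear_combination (1/864) * j2 + (1/6) * e13
  have h16 : v 16 = 0 := by linear_combination (1/3) * e10
  have h17 : v 17 = 0 := by linear_combination (1/3) * e11
  have h18 : v 18 = 0 := by linear_combination (1/864) * j1 + (1/6) * e14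
  have h19 : v 19 = 0 := by linear_combination (1/3) * e15 + (-1/6) * e0
  funext i
  fin_cases i <;> assumption

/-- If `(b, c, d) ≠ 0` the Nanson matrix of `cubicA b c d` has corank at most two. -/
theorem rank_cubicA {K : Type*} [Field K] [CharZero K] {b c d : K} (hne : b ≠ 0 ∨ c ≠ 0 ∨ d ≠ 0)
    {g : Fin 20 → K} (hg : cubicOf g = cubicA b c d) : 18 ≤ (nan g).rank := by
  by_cases hb : b = 0
  · subst hb
    by_cases hc : c = 0
    · subst hc
      have hd : d ≠ 0 := by simpa using hne
      have := le_rank_of_coords (g := g) ![19, 15] (fun v hv h0 => by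
        rw [hg] at hv
        obtain ⟨⟨e1, e2, e3, e4, e5, e6⟩, h⟩ := cubicA_red hv
        have h19 : v 19 = 0 := h0 0
        have h15 : v 15 = 0 := h0 1
        have h17 : v 17 = 0 := by simpa [hd] using e2
        have h18 : v 18 = 0 := by simpa [hd] using e1
        have h6 : v 6 = 0 := by simpa [hd] using e3
        have h14 : v 14 = 0 := by simpa [hd] using e5
        exact h h6 h14 h15 h17 h18 h19)
      omega
    · have := le_rank_of_coords (g := g) ![17, 14] (fun v hv h0 => by
        rw [hg] at hv
        obtain ⟨⟨e1, e2, e3, e4, e5, e6⟩, h⟩ := cubicA_red hv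
        have h17 : v 17 = 0 := h0 0
        have h14 : v 14 = 0 := h0 1
        have h18 : v 18 = 0 := by simpa [hc, h17] using e2
        have h19 : v 19 = 0 := by simpa [hc, h17, h18] using e4
        have h15 : v 15 = 0 := by simpa [hc, h14] using e6
        have h6 : v 6 = 0 := by simpa [hc, h14, h15] using e5
        exact h h6 h14 h15 h17 h18 h19)
      omega
  · by_contra hlt
    -- If the kernel had dimension three, these three coordinates would take arbitrary values on it.
    obtain ⟨v, hv, hv'⟩ := exists_nanKer (g := g) ![17, 18, 19] (fun v hv h0 => by
        rw [hg] at hv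
        obtain ⟨⟨e1, e2, e3, e4, e5, e6⟩, h⟩ := cubicA_red hv
        have h17 : v 17 = 0 := h0 0
        have h18 : v 18 = 0 := h0 1
        have h19 : v 19 = 0 := h0 2
        have h15 : v 15 = 0 := by simpa [hb, h17, h18] using e2
        have h14 : v 14 = 0 := by simpa [hb, h17, h18, h19] using e1
        have h6 : v 6 = 0 := by simpa [hb, h17, h18, h19, h15] using e4
        exact h h6 h14 h15 h17 h18 h19) (by omega) ![1, 0, 0]
    rw [hg] at hv
    obtain ⟨⟨e1, e2, e3, e4, e5, e6⟩, -⟩ := cubicA_red hv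
    have h17 : v 17 = 1 := hv' 0
    have h18 : v 18 = 0 := hv' 1
    have h19 : v 19 = 0 := hv' 2
    simp only [h17, h18, h19, mul_zero, mul_one, add_zero, sub_zero] at e1 e2 e3 e4 e5 e6
    have hcd : c * d ^ 2 = 0 := by
      linear_combination (-4 / 189 : K) * (b * e5 - 9 / 4 * d ^ 2 * e1 - 9 / 8 * c * d * e2
        + 27 / 32 * c * (e4 - d * e2))
    have hb3 : 81 * c ^ 2 * d + 16 * b ^ 3 = 0 := by
      linear_combination -2 * b * e6 + 9 / 2 * c * d * e1 + 27 / 4 * c ^ 2 * e2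
    have hcd' : c = 0 ∨ d = 0 := by simpa using hcd
    rcases hcd' with rfl | rfl <;> simp [hb] at hb3

/-- If `(b, c) ≠ 0` the Nanson matrix of `cubicA b c 0` has corank at most one. -/
theorem rank_cubicA_zero {K : Type*} [Field K] [CharZero K] {b c : K} (hne : b ≠ 0 ∨ c ≠ 0)
    {g : Fin 20 → K} (hg : cubicOf g = cubicA b c 0) : 19 ≤ (nan g).rank := by
  have := le_rank_of_coords (g := g) ![17] (fun v hv h0 => by
    rw [hg] at hv
    obtain ⟨⟨e1, e2, e3, e4, e5, e6⟩, h⟩ := cubicA_red hv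
    have h17 : v 17 = 0 := h0 0
    simp only [h17, mul_zero, zero_mul, add_zero, sub_zero, zero_add, ne_eq, OfNat.ofNat_ne_zero,
      not_false_eq_true, zero_pow, zero_sub] at e1 e2 e3 e4 e5 e6
    by_cases hb : b = 0
    · subst hb
      have hc : c ≠ 0 := by simpa using hne
      simp [hc] at e2 e3 e4 e5 e6
      exact h e5 e3 e6 h17 e2 e4
    · have h14 : v 14 = 0 := by simpa [hb] using e1
      have h19 : v 19 = 0 := by simpa [hb, h14] using e3
      have h6 : v 6 = 0 := by simpa [hb, h19] using e4
      have h18 : v 18 = 0 := by simpa [hb, h6] using e5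
      have h15 : v 15 = 0 := by simpa [hb, h18] using e2
      exact h h6 h14 h15 h17 h18 h19)
  omega

/-- If `(b, a) ≠ 0` the Nanson matrix of `cubicB b a` has corank at most one. -/
theorem rank_cubicB {K : Type*} [Field K] [CharZero K] {b a : K} (hne : b ≠ 0 ∨ a ≠ 0)
    {g : Fin 20 → K} (hg : cubicOf g = cubicB b a) : 19 ≤ (nan g).rank := by
  have := le_rank_of_coords (g := g) ![19] (fun v hv h0 => by
    rw [hg] at hv
    obtain ⟨⟨e1, e2, e3, e4, e5⟩, h⟩ := cubicB_red hv
    have h19 : v 19 = 0 := h0 0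
    by_cases hb : b = 0
    · subst hb
      have ha : a ≠ 0 := by simpa using hne
      simp [ha] at e2 e3 e4 e5
      exact h e3 e5 e4 e2 h19
    · have h15 : v 15 = 0 := by simpa [hb, h19] using e1
      have h16 : v 16 = 0 := by simpa [hb, h15] using e3
      have h17 : v 17 = 0 := by simpa [hb, h16] using e5
      have h18 : v 18 = 0 := by simpa [hb, h17] using e4
      exact h h15 h16 h17 h18 h19)
  omega

theorem rank_cubicC {K : Type*} [Field K] [CharZero K] {g : Fin 20 → K}
    (hg : cubicOf g = cubicC) : 18 ≤ (nan g).rank := by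
  have := le_rank_of_coords (g := g) ![4, 10] (fun v hv h0 => by
    rw [hg] at hv
    exact cubicC_red hv (h0 0) (h0 1))
  omega

theorem rank_cubicD {K : Type*} [Field K] [CharZero K] {g : Fin 20 → K}
    (hg : cubicOf g = cubicD) : 20 ≤ (nan g).rank :=
  le_rank_of_coords (g := g) (s := 0) ![] (fun v hv _ => by
    rw [hg] at hv
    exact cubicD_red hv)

/-! ### The upper bounds -/

/-- A computable form of `monWeight`. -/
def wt (lam : Fin 4 → ℤ) (m : Fin 20) : ℤ := ∑ i, lam i * expTab m i

theorem monWeight_eq_wt (lam : Fin 4 → ℤ) (m : Fin 20) : monWeight lam m = wt lam m := rfl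

/-- Repeated slicing by the coordinates in `l`, for the one-parameter group with weights `lam`. -/
theorem HasPoint.slices {k r : ℕ} {Z Z' N : Finset (Fin 20)} (lam : Fin 4 → ℤ)
    (l : List (Fin 20)) (h : HasPoint (nansonMinorsIdeal k) Z N (r + l.length))
    (hpos : ∀ m, m ∈ Z ∨ (m ∈ N ∧ wt lam m = 0) ∨ (m ∉ N ∧ 0 < wt lam m))
    (hl : ∀ a ∈ l, 0 < wt lam a) (hZ' : ∀ m ∈ Z', m ∈ Z ∨ m ∈ l) :
    HasPoint (nansonMinorsIdeal k) Z' N r := by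
  induction l generalizing Z with
  | nil => exact h.mono (fun m hm => by simpa using hZ' m hm) subset_rfl le_rfl
  | cons a l ih =>
    refine ih (HasPoint.slice (r := r + l.length) h (scaleInv_nansonMinorsIdeal k lam)
      hpos a (hl a (by simp))) (fun m => ?_) (fun b hb => hl b (by simp [hb])) (fun m hm => ?_)
    · rcases hpos m with h | h
      exacts [Or.inl (Finset.mem_insert_of_mem h), Or.inr h]
    · rcases hZ' m hm with h | h
      · exact Or.inl (Finset.mem_insert_of_mem h)
      · rcases List.mem_cons.mp h with rfl | h
        exacts [Or.inl (Finset.mem_insert_self _ _), Or.inr h]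

/-- `HasPoint.normalise` for the ideals of minors. -/
theorem HasPoint.split {k r : ℕ} {Z N : Finset (Fin 20)} (lam : Fin 4 → ℤ)
    (h : HasPoint (nansonMinorsIdeal k) Z N (r + 1)) (a : Fin 20)
    (ha : wt lam a ≠ 0) (hN0 : ∀ m ∈ N, wt lam m = 0) :
    HasPoint (nansonMinorsIdeal k) (insert a Z) N (r + 1) ∨
      HasPoint (nansonMinorsIdeal k) Z (insert a N) r :=
  h.normalise (scaleInv_nansonMinorsIdeal k lam) a ha hN0

/-- The permutation of the twenty monomials induced by exchanging `x₁` and `x₂`. -/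
def swap12 : Equiv.Perm (Fin 20) :=
  Function.Involutive.toPerm
    ![0, 2, 1, 3, 7, 5, 8, 4, 6, 9, 16, 13, 17, 11, 14, 18, 10, 12, 15, 19]
    (by unfold Function.Involutive; decide)

/-- The permutation of the twenty monomials induced by exchanging `x₁` and `x₃`. -/
def swap13 : Equiv.Perm (Fin 20) :=
  Function.Involutive.toPerm
    ![0, 3, 2, 1, 9, 8, 6, 7, 5, 4, 19, 18, 15, 17, 14, 12, 16, 13, 11, 10]
    (by unfold Function.Involutive; decide)

/-- The permutation of the twenty monomials induced by exchanging `x₂` and `x₃`. -/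
def swap23 : Equiv.Perm (Fin 20) :=
  Function.Involutive.toPerm
    ![0, 1, 3, 2, 4, 6, 5, 9, 8, 7, 10, 12, 11, 15, 14, 13, 19, 18, 17, 16]
    (by unfold Function.Involutive; decide)

theorem HasPoint.swap12 {k r : ℕ} {Z N Z' N' : Finset (Fin 20)}
    (h : HasPoint (nansonMinorsIdeal k) Z N r) (hZ : Z' = Z.image swap12)
    (hN : N' = N.image swap12) : HasPoint (nansonMinorsIdeal k) Z' N' r :=
  h.perm (Equiv.swap 1 2) _ (by
    intro m i
    rw [cubicExp_apply, cubicExp_apply]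
    revert m i
    decide) hZ hN

theorem HasPoint.swap13 {k r : ℕ} {Z N Z' N' : Finset (Fin 20)}
    (h : HasPoint (nansonMinorsIdeal k) Z N r) (hZ : Z' = Z.image swap13)
    (hN : N' = N.image swap13) : HasPoint (nansonMinorsIdeal k) Z' N' r :=
  h.perm (Equiv.swap 1 3) _ (by
    intro m i
    rw [cubicExp_apply, cubicExp_apply]
    revert m i
    decide) hZ hN

theorem HasPoint.swap23 {k r : ℕ} {Z N Z' N' : Finset (Fin 20)}
    (h : HasPoint (nansonMinorsIdeal k) Z N r) (hZ : Z' = Z.image swap23)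
    (hN : N' = N.image swap23) : HasPoint (nansonMinorsIdeal k) Z' N' r :=
  h.perm (Equiv.swap 2 3) _ (by
    intro m i
    rw [cubicExp_apply, cubicExp_apply]
    revert m i
    decide) hZ hN

/-- If there is a point with as many independent coordinates as there are unconstrained ones, then
the locus `{c_Z = 0, c_N = 1}` lies in `Vₖ`, so every complex cubic in it has small rank. -/
theorem HasPoint.rank_lt_of_full {k r : ℕ} {Z N : Finset (Fin 20)}
    (h : HasPoint (nansonMinorsIdeal k) Z N r) (hr : 20 ≤ r + (Z ∪ N).card) (v : Fin 20 → ℂ)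
    (hvZ : ∀ m ∈ Z, v m = 0) (hvN : ∀ m ∈ N, v m = 1) : (nan v).rank < 20 - k + 1 :=
  (minors_vanish_iff v k).mp fun _ hp => h.eq_zero_of_full hr hp v hvZ hvN

/-- If no constraint is violated by `cubicD` and there are enough independent coordinates for the
point to be generic, then `cubicD` would be a point of `Vₖ`, although its Nanson matrix is
invertible. -/
theorem not_full_cubicD {k r : ℕ} (hk : 1 ≤ k) {Z N : Finset (Fin 20)}
    (h : HasPoint (nansonMinorsIdeal k) Z N r) (hr : 20 ≤ r + (Z ∪ N).card)
    (hZ : Z ⊆ {0, 1, 2, 4, 5, 6, 7, 8, 9, 11, 12, 13, 14, 15, 17, 18}) (hN : N ⊆ {3}) : False := by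
  have h1 := h.rank_lt_of_full hr ![0, 0, 0, 1, 0, 0, 0, 0, 0, 0, 1, 0, 0, 0, 0, 0, 1, 0, 0, 1]
    (fun m hm => by
      have := hZ hm
      clear hm
      simp only [Finset.mem_insert, Finset.mem_singleton] at this
      rcases this with rfl | rfl | rfl | rfl | rfl | rfl | rfl | rfl | rfl | rfl | rfl | rfl | rfl |
        rfl | rfl | rfl <;> rfl)
    (fun m hm => by
      have := hN hm
      clear hm
      simp only [Finset.mem_singleton] at this
      subst this
      rfl)
  have h2 := rank_cubicD cubicOf_eq_cubicD (K := ℂ)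
  omega

/-- The stratum with leading part `x₀²x₃ + x₀x₂²` and no `x₁³`. -/
theorem not_K2 (h : HasPoint (nansonMinorsIdeal 3) {0, 1, 2, 4, 5, 10} {3, 7} 11) : False := by
  rcases h.split ![-2, 5, 1, 4] 11 (by decide) (by decide) with h | h
  · have h1 := h.rank_lt_of_full (by decide)
      ![0, 0, 0, 1, 0, 0, 0, 1, 0, 0, 0, 0, 1, 0, 0, 0, 0, 0, 0, 1] (by simp) (by simp)
    have h2 := rank_cubicC cubicOf_eq_cubicC (K := ℂ)
    omega
  · have h := h.slices (r := 1) (Z' := {0, 1, 2, 4, 5, 10, 6, 8, 9, 12, 13, 14, 16, 17, 18})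
      ![-4, -1, 2, 8] [6, 8, 9, 12, 13, 14, 16, 17, 18] (by decide) (by decide) (by decide)
    obtain ⟨K, _, _, g, hI, hZ, hN, m, hmZ, hmN, hm⟩ := h.exists_ne_zero
    have : CharZero K := charZero_of_injective_algebraMap (algebraMap ℂ K).injective
    have hg : g = ![0, 0, 0, 1, 0, 0, 0, 1, 0, 0, 0, 1, 0, 0, 0, g 15, 0, 0, 0, g 19] := by
      funext i
      fin_cases i <;> first | rfl | exact hZ _ (by decide) | exact hN _ (by decide)
    have hm' : m = 15 ∨ m = 19 := by
      clear hm
      revert m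
      decide
    have h1 := (minors_vanish_iff g 3).mp hI
    have h2 := rank_cubicB (g := g) (b := g 15) (a := g 19)
      (by rcases hm' with rfl | rfl <;> simp [hm]) (by
        rw [hg]
        exact cubicOf_eq_cubicB _ _)
    omega

/-- The stratum with leading part `x₀²x₃` and no `x₀x₂²`. -/
theorem not_K1 (h : HasPoint (nansonMinorsIdeal 3) {0, 1, 2, 7} {3} 14) : False := by
  rcases h.split ![-1, 3, 3, 2] 4 (by decide) (by decide) with h | h
  · exact not_full_cubicD (by decide) h (by decide) (by decide) (by decide)
  · have h := h.slices (r := 11) (Z' := {0, 1, 2, 7, 5, 16}) ![-2, 1, 5, 4] [5, 16]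
      (by decide) (by decide) (by decide)
    exact not_K2 (h.swap12 (by decide) (by decide))

/-- The stratum without `x₀³` and `x₀²x₃`. -/
theorem not_Br0 (h : HasPoint (nansonMinorsIdeal 3) {0, 3} ∅ 17) : False := by
  rcases h.split ![1, 1, 1, 1] 1 (by decide) (by decide) with h | h
  · have h := h.swap23 (Z' := {0, 1, 2}) (N' := ∅) (by decide) (by decide)
    exact not_full_cubicD (by decide) h (by decide) (by decide) (by decide)
  · have h := h.swap13 (Z' := {0, 1}) (N' := {3}) (by decide) (by decide)
    exact not_K1 (h.slices (r := 14) ![-1, 3, 3, 2] [2, 7] (by decide) (by decide) (by decide))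

/-- The coordinates `3`, `7`, `10` normalised in turn are the coefficients of `x₀²x₃`, `x₀x₂²`, `x₁³`.
Each one-parameter group fixes the monomials normalised so far and has positive weight on every
other monomial that is not yet eliminated. -/
theorem not_hasPoint_three : ¬ HasPoint (nansonMinorsIdeal 3) ∅ ∅ 18 := by
  intro h
  have h := h.slices (r := 17) (Z' := {0}) ![1, 1, 1, 1] [0] (by decide) (by decide) (by decide)
  rcases h.split ![1, 1, 1, 1] 3 (by decide) (by decide) with h | h
  · exact not_Br0 (h.mono (by decide) (by decide) le_rfl)
  have h := h.slices (r := 14) (Z' := {0, 1, 2}) ![-1, 3, 3, 2] [1, 2]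
    (by decide) (by decide) (by decide)
  rcases h.split ![-1, 3, 3, 2] 7 (by decide) (by decide) with h | h
  · exact not_K1 (h.mono (by decide) (by decide) le_rfl)
  have h := h.slices (r := 11) (Z' := {0, 1, 2, 4, 5}) ![-2, 5, 1, 4] [4, 5]
    (by decide) (by decide) (by decide)
  rcases h.split ![-2, 5, 1, 4] 10 (by decide) (by decide) with h | h
  · exact not_K2 (h.mono (by decide) (by decide) le_rfl)
  have h := h.slices (r := 1) (Z' := {0, 1, 2, 4, 5, 6, 8, 9, 11, 12, 13, 14, 16, 19})
    ![-2, 0, 1, 4] [6, 8, 9, 11, 12, 13, 14, 16, 19] (by decide) (by decide) (by decide)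
  obtain ⟨K, _, _, g, hI, hZ, hN, m, hmZ, hmN, hm⟩ := h.exists_ne_zero
  have : CharZero K := charZero_of_injective_algebraMap (algebraMap ℂ K).injective
  have hg : g = ![0, 0, 0, 1, 0, 0, 0, 1, 0, 0, 1, 0, 0, 0, 0, g 15, 0, g 17, g 18, 0] := by
    funext i
    fin_cases i <;> first | rfl | exact hZ _ (by decide) | exact hN _ (by decide)
  have hm' : m = 15 ∨ m = 17 ∨ m = 18 := by
    clear hm
    revert m
    decide
  have h1 := (minors_vanish_iff g 3).mp hI
  have h2 := rank_cubicA (g := g) (b := g 15) (c := g 18) (d := g 17)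
    (by rcases hm' with rfl | rfl | rfl <;> simp [hm]) (by
      rw [hg]
      exact cubicOf_eq_cubicA _ _ _)
  omega

/-- The reduction of `not_hasPoint_three` with one more independent coordinate to spare, which allows
the coefficient `17` of `x₂²x₃` to be eliminated as well. -/
theorem not_hasPoint_two : ¬ HasPoint (nansonMinorsIdeal 2) ∅ ∅ 19 := by
  intro h
  have h := h.slices (r := 18) (Z' := {0}) ![1, 1, 1, 1] [0] (by decide) (by decide) (by decide)
  rcases h.split ![1, 1, 1, 1] 3 (by decide) (by decide) with h | h
  · have h := h.swap13 (Z' := {0, 1}) (N' := ∅) (by decide) (by decide)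
    exact not_full_cubicD (by decide) h (by decide) (by decide) (by decide)
  have h := h.slices (r := 15) (Z' := {0, 1, 2}) ![-1, 3, 3, 2] [1, 2]
    (by decide) (by decide) (by decide)
  rcases h.split ![-1, 3, 3, 2] 7 (by decide) (by decide) with h | h
  · exact not_full_cubicD (by decide) h (by decide) (by decide) (by decide)
  have h := h.slices (r := 12) (Z' := {0, 1, 2, 4, 5}) ![-2, 5, 1, 4] [4, 5]
    (by decide) (by decide) (by decide)
  rcases h.split ![-2, 5, 1, 4] 10 (by decide) (by decide) with h | h
  · have h1 := h.rank_lt_of_full (by decide)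
      ![0, 0, 0, 1, 0, 0, 0, 1, 0, 0, 0, 1, 0, 0, 0, 0, 0, 0, 0, 1] (by simp) (by simp)
    have h2 := rank_cubicB (K := ℂ) (b := 0) (a := 1) (by simp) (cubicOf_eq_cubicB _ _)
    omega
  have h := h.slices (r := 1) (Z' := {0, 1, 2, 4, 5, 6, 8, 9, 11, 12, 13, 14, 16, 17, 19})
    ![-2, 0, 1, 4] [6, 8, 9, 11, 12, 13, 14, 16, 17, 19] (by decide) (by decide) (by decide)
  obtain ⟨K, _, _, g, hI, hZ, hN, m, hmZ, hmN, hm⟩ := h.exists_ne_zero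
  have : CharZero K := charZero_of_injective_algebraMap (algebraMap ℂ K).injective
  have hg : g = ![0, 0, 0, 1, 0, 0, 0, 1, 0, 0, 1, 0, 0, 0, 0, g 15, 0, 0, g 18, 0] := by
    funext i
    fin_cases i <;> first | rfl | exact hZ _ (by decide) | exact hN _ (by decide)
  have hm' : m = 15 ∨ m = 18 := by
    clear hm
    revert m
    decide
  have h1 := (minors_vanish_iff g 2).mp hI
  have h2 := rank_cubicA_zero (g := g) (b := g 15) (c := g 18)
    (by rcases hm' with rfl | rfl <;> simp [hm]) (by
      rw [hg]
      exact cubicOf_eq_cubicA _ _ _)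
  omega

theorem ringKrullDim_two_le :
    ringKrullDim (MvPolynomial (Fin 20) ℂ ⧸ nansonMinorsIdeal 2) ≤ 18 :=
  ringKrullDim_quotient_le_of_points (n := 18) _ fun K _ _ g hg hr =>
    not_hasPoint_two ⟨K, _, _, g, hg, by simp, by simp, hr⟩

theorem ringKrullDim_le_of_three_le {k : ℕ} (hk : 3 ≤ k) :
    ringKrullDim (MvPolynomial (Fin 20) ℂ ⧸ nansonMinorsIdeal k) ≤ 17 :=
  ringKrullDim_quotient_le_of_points (n := 17) _ fun K _ _ g hg hr => by
    refine not_hasPoint_three ⟨K, _, _, g, (minors_vanish_iff g 3).mpr ?_, by simp, by simp, hr⟩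
    have := (minors_vanish_iff g k).mp hg
    omega

/-! ### The Jacobian criterion, and cubics of rank at most 18 -/

theorem pderiv_aeval {r : ℕ} (f : Fin r → MvPolynomial (Fin r) ℂ) (j : Fin r)
    (P : MvPolynomial (Fin r) ℂ) :
    pderiv j (aeval f P) = ∑ i, aeval f (pderiv i P) * pderiv j (f i) := by
  induction P using MvPolynomial.induction_on with
  | C a => simp
  | add p q hp hq => simp only [map_add, hp, hq, add_mul, Finset.sum_add_distrib]
  | mul_X p m hp =>
    rw [map_mul, Derivation.leibniz, hp, aeval_X]
    simp only [Derivation.leibniz, map_add, smul_eq_mul, map_mul, add_mul,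
      Finset.sum_add_distrib, pderiv_X, Pi.single_apply, aeval_X]
    congr 1
    · rw [Finset.sum_eq_single m]
      · simp
      · intro b _ hb
        simp [hb.symm]
      · simp
    · rw [Finset.mul_sum]
      exact Finset.sum_congr rfl fun i _ => by ring

theorem totalDegree_pderiv_le {r n : ℕ} {P : MvPolynomial (Fin r) ℂ} (h : P.totalDegree ≤ n + 1)
    (i : Fin r) : (pderiv i P).totalDegree ≤ n := by
  refine Finset.sup_le fun m hm => ?_
  rw [mem_support_iff, coeff_pderiv] at hm
  have := (le_totalDegree (mem_support_iff.mpr (left_ne_zero_of_mul hm))).trans h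
  rw [Finsupp.sum_add_index' (fun _ => rfl) (fun _ _ _ => rfl),
    Finsupp.sum_single_index rfl] at this
  omega

/-- The Jacobian criterion: polynomials over `ℂ` with nonzero Jacobian determinant are
algebraically independent. Differentiating a relation of minimal degree gives a smaller one. -/
theorem algebraicIndependent_of_jacobian {r : ℕ} (f : Fin r → MvPolynomial (Fin r) ℂ)
    (h : (Matrix.of fun i j => pderiv j (f i)).det ≠ 0) : AlgebraicIndependent ℂ f := by
  rw [algebraicIndependent_iff]
  have key : ∀ n (P : MvPolynomial (Fin r) ℂ), P.totalDegree ≤ n → aeval f P = 0 → P = 0 := by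
    intro n
    induction n with
    | zero =>
      intro P hn hP
      rw [totalDegree_eq_zero_iff_eq_C.mp (Nat.le_zero.mp hn)] at hP ⊢
      rwa [aeval_C, algebraMap_eq] at hP
    | succ n ih =>
      intro P hn hP
      have h0 : (fun i => aeval f (pderiv i P)) = 0 := by
        refine Matrix.eq_zero_of_vecMul_eq_zero h (funext fun j => ?_)
        have := pderiv_aeval f j P
        rw [hP, map_zero] at this
        exact this.symm
      have h1 : ∀ i, pderiv i P = 0 := fun i =>
        ih _ (totalDegree_pderiv_le hn i) (congrFun h0 i)
      refine ih P ?_ hP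
      refine (Finset.sup_le fun m hm => ?_ : P.totalDegree ≤ 0).trans (Nat.zero_le n)
      rw [mem_support_iff] at hm
      by_contra hm0
      have hm1 : m ≠ 0 := by
        rintro rfl
        simp at hm0
      obtain ⟨i, hi⟩ := Finsupp.ne_iff.mp hm1
      have hmi : m - Finsupp.single i 1 + Finsupp.single i 1 = m :=
        tsub_add_cancel_of_le (by simpa [Nat.one_le_iff_ne_zero] using hi)
      have := coeff_pderiv (i := i) P (m - Finsupp.single i 1)
      rw [h1 i, hmi, coeff_zero] at this
      rcases mul_eq_zero.mp this.symm with h2 | h2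
      · exact hm h2
      · exact Nat.cast_add_one_ne_zero _ h2
  exact fun P => key _ P le_rfl

/-- The cubic `x₀ q(x₂, x₃) + c(x₁, x₂, x₃)`; it is singular at `(1:0:0:0)` and its tangent cone
there is a pair of planes. -/
noncomputable def cuspCubic {K : Type*} [CommRing K] (q : Fin 3 → K) (c : Fin 10 → K) :
    MvPolynomial (Fin 4) K :=
  X 0 * (C (q 0) * X 2 ^ 2 + C (q 1) * X 2 * X 3 + C (q 2) * X 3 ^ 2) +
    (C (c 0) * X 1 ^ 3 + C (c 1) * X 1 ^ 2 * X 2 + C (c 2) * X 1 ^ 2 * X 3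
      + C (c 3) * X 1 * X 2 ^ 2 + C (c 4) * X 1 * X 2 * X 3 + C (c 5) * X 1 * X 3 ^ 2
      + C (c 6) * X 2 ^ 3 + C (c 7) * X 2 ^ 2 * X 3 + C (c 8) * X 2 * X 3 ^ 2 + C (c 9) * X 3 ^ 3)

theorem coeff_eq_zero_of_mem_span {K : Type*} [Field K] {f : MvPolynomial (Fin 4) K}
    (hf : f ∈ Ideal.span {(X 2 : MvPolynomial (Fin 4) K), X 3}) {m : Fin 20}
    (h2 : cubicExp m 2 = 0) (h3 : cubicExp m 3 = 0) : coeff (cubicExp m) f = 0 := by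
  obtain ⟨a, b, rfl⟩ := Ideal.mem_span_pair.mp hf
  simp [coeff_mul_X', h2, h3]

theorem pderiv_cuspCubic {K : Type*} [Field K] (q : Fin 3 → K) (c : Fin 10 → K) (i : Fin 4) :
    ∃ k : K, ∃ f ∈ Ideal.span {(X 2 : MvPolynomial (Fin 4) K), X 3},
      pderiv i (cuspCubic q c) = C k * X 1 ^ 2 + f := by
  refine ⟨![0, 3 * c 0, c 1, c 2] i, _, ?_, (add_sub_cancel _ _).symm⟩
  rw [Ideal.mem_span_pair]
  fin_cases i
  · exact ⟨C (q 0) * X 2 + C (q 1) * X 3, C (q 2) * X 3, by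
      simp [cuspCubic]; ring⟩
  · exact ⟨2 * C (c 1) * X 1 + C (c 3) * X 2 + C (c 4) * X 3, 2 * C (c 2) * X 1 + C (c 5) * X 3, by
      simp [cuspCubic, C_ofNat]; ring⟩
  · exact ⟨2 * X 0 * C (q 0) + 2 * C (c 3) * X 1 + 3 * C (c 6) * X 2 + 2 * C (c 7) * X 3,
      X 0 * C (q 1) + C (c 4) * X 1 + C (c 8) * X 3, by
      simp [cuspCubic]; ring⟩
  · exact ⟨X 0 * C (q 1) + C (c 4) * X 1 + C (c 7) * X 2,
      2 * X 0 * C (q 2) + 2 * C (c 5) * X 1 + 2 * C (c 8) * X 2 + 3 * C (c 9) * X 3, by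
      simp [cuspCubic]; ring⟩

/-- The Hessian lies in `(x₂, x₃)²`, because its first row and column are zero apart from two linear
forms in `x₂, x₃`. -/
theorem pderiv_hess_cuspCubic {K : Type*} [Field K] (q : Fin 3 → K) (c : Fin 10 → K) (i : Fin 4) :
    pderiv i (hess (cuspCubic q c)) ∈ Ideal.span {(X 2 : MvPolynomial (Fin 4) K), X 3} := by
  set J := Ideal.span {(X 2 : MvPolynomial (Fin 4) K), X 3} with hJ
  have h2 : (X 2 : MvPolynomial (Fin 4) K) ∈ J := Ideal.subset_span (by simp)
  have h3 : (X 3 : MvPolynomial (Fin 4) K) ∈ J := Ideal.subset_span (by simp)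
  set F := cuspCubic q c with hF
  have e0 : pderiv 0 F = C (q 0) * X 2 ^ 2 + C (q 1) * X 2 * X 3 + C (q 2) * X 3 ^ 2 := by
    simp [hF, cuspCubic]
  have h00 : pderiv 0 (pderiv 0 F) = 0 := by simp [e0]
  have h01 : pderiv 1 (pderiv 0 F) = 0 := by simp [e0]
  have h02 : pderiv 2 (pderiv 0 F) ∈ J := by
    have : pderiv 2 (pderiv 0 F) = (2 * C (q 0)) * X 2 + C (q 1) * X 3 := by
      simp [e0]; ring
    rw [this]
    exact J.add_mem (J.mul_mem_left _ h2) (J.mul_mem_left _ h3)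
  have h03 : pderiv 3 (pderiv 0 F) ∈ J := by
    have : pderiv 3 (pderiv 0 F) = C (q 1) * X 2 + (2 * C (q 2)) * X 3 := by
      simp [e0]; ring
    rw [this]
    exact J.add_mem (J.mul_mem_left _ h2) (J.mul_mem_left _ h3)
  have hsymm : ∀ i j, pderiv i (pderiv j F) = pderiv j (pderiv i F) := by
    intro i j
    rcases eq_or_ne i j with rfl | hij
    · rfl
    ext m
    simp only [coeff_pderiv, Finsupp.add_apply, Finsupp.single_eq_of_ne hij,
      Finsupp.single_eq_of_ne hij.symm, add_zero]
    rw [add_right_comm]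
    ring
  obtain ⟨P, Q, R, hPQR⟩ : ∃ P Q R, hess F = (pderiv 2 (pderiv 0 F)) ^ 2 * P
      + pderiv 2 (pderiv 0 F) * pderiv 3 (pderiv 0 F) * Q + (pderiv 3 (pderiv 0 F)) ^ 2 * R := by
    let A : Matrix (Fin 4) (Fin 4) (MvPolynomial (Fin 4) K) := .of fun i j => pderiv j (pderiv i F)
    refine ⟨-(A 1 1 * A 3 3 - A 1 3 * A 3 1),
      (A 1 1 * A 2 3 - A 1 3 * A 2 1) + (A 1 1 * A 3 2 - A 1 2 * A 3 1),
      -(A 1 1 * A 2 2 - A 1 2 * A 2 1), ?_⟩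
    rw [hess, det_fin_four]
    simp only [A, Matrix.of_apply, h00, h01, hsymm 0 1, hsymm 0 2, hsymm 0 3]
    ring
  have hsq : ∀ a ∈ J, ∀ b ∈ J, ∀ P, pderiv i (a * b * P) ∈ J := by
    intro a ha b hb P
    simp only [Derivation.leibniz, smul_eq_mul]
    exact J.add_mem (J.mul_mem_right _ (J.mul_mem_right _ ha)) (J.mul_mem_left _
      (J.add_mem (J.mul_mem_right _ ha) (J.mul_mem_right _ hb)))
  rw [hPQR, sq, sq, map_add, map_add]
  exact J.add_mem (J.add_mem (hsq _ h02 _ h02 _) (hsq _ h02 _ h03 _)) (hsq _ h03 _ h03 _)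

theorem rank_cuspCubic {K : Type*} [Field K] {g : Fin 20 → K} {q : Fin 3 → K} {c : Fin 10 → K}
    (hg : cubicOf g = cuspCubic q c) : (nan g).rank ≤ 18 := by
  have hcol : ∀ m : Fin 20, m = 0 ∨ m = 1 → ∀ r, nan g r m = 0 := by
    intro m hm r
    have h2 : cubicExp m 2 = 0 := by rcases hm with rfl | rfl <;> rfl
    have h3 : cubicExp m 3 = 0 := by rcases hm with rfl | rfl <;> rfl
    have hle : nanSpan (cubicOf g) ≤ LinearMap.ker (lcoeff K (cubicExp m)) := by
      rw [hg]
      refine nanSpan_le (fun i j => ?_) (fun i => ?_)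
      · obtain ⟨k, f, hf, h⟩ := pderiv_cuspCubic q c i
        rw [h, LinearMap.mem_ker, lcoeff_apply, mul_add, coeff_add,
          coeff_eq_zero_of_mem_span (Ideal.mul_mem_left _ _ hf) h2 h3, add_zero]
        have h1 : cubicExp m 1 < 2 := by rcases hm with rfl | rfl <;> decide
        rw [show (X j * (C k * X 1 ^ 2) : MvPolynomial (Fin 4) K)
          = X j * C k * X 1 * X 1 by ring, coeff_mul_X', coeff_mul_X']
        split_ifs with ha hb
        · simp [Finsupp.mem_support_iff] at ha hb
          omega
        · rfl
        · rfl
      · exact coeff_eq_zero_of_mem_span (pderiv_hess_cuspCubic q c i) h2 h3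
    exact hle (Submodule.subset_span ⟨r, rfl⟩)
  have hmul : nan g =
      nan g * Matrix.diagonal (fun m : Fin 20 => if m = 0 ∨ m = 1 then 0 else 1) := by
    ext r m
    rw [Matrix.mul_diagonal]
    by_cases hm : m = 0 ∨ m = 1
    · simp [hm, hcol m hm r]
    · simp [hm]
  classical
  rw [hmul]
  refine (Matrix.rank_mul_le_right _ _).trans ?_
  rw [Matrix.rank_diagonal, Fintype.card_subtype]
  simp only [ne_eq, ite_eq_left_iff, one_ne_zero, imp_false, not_not]
  decide

/-! ### A family of cubics with 18 parameters -/

/-- The coefficients of `x₀ q(z₂, z₃) + c(y, z₂, z₃)`, where `y = x₁ - u₀x₀`,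
`z₂ = x₂ - u₁x₀ - u₃x₁`, `z₃ = x₃ - u₂x₀ - u₄x₁`, the binary quadratic form `q` has coefficients
`u₅, u₆, u₇` and the ternary cubic form `c` has coefficients `u₈, …, u₁₇`. -/
def cuspVec {K : Type*} [CommRing K] (u : Fin 18 → K) : Fin 20 → K :=
  ![
    -u 0 ^ 3 * u 8 - u 0 ^ 2 * u 1 * u 9 - u 0 ^ 2 * u 2 * u 10 - u 0 * u 1 ^ 2 * u 11
      - u 0 * u 1 * u 2 * u 12 - u 0 * u 2 ^ 2 * u 13 - u 1 ^ 3 * u 14 - u 1 ^ 2 * u 2 * u 15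
      + u 1 ^ 2 * u 5 - u 1 * u 2 ^ 2 * u 16 + u 1 * u 2 * u 6 - u 2 ^ 3 * u 17 + u 2 ^ 2 * u 7,
    -u 0 ^ 2 * u 3 * u 9 - u 0 ^ 2 * u 4 * u 10 + 3 * u 0 ^ 2 * u 8 - 2 * u 0 * u 1 * u 3 * u 11
      - u 0 * u 1 * u 4 * u 12 + 2 * u 0 * u 1 * u 9 - u 0 * u 2 * u 3 * u 12
      - 2 * u 0 * u 2 * u 4 * u 13 + 2 * u 0 * u 2 * u 10 - 3 * u 1 ^ 2 * u 3 * u 14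
      - u 1 ^ 2 * u 4 * u 15 + u 1 ^ 2 * u 11 - 2 * u 1 * u 2 * u 3 * u 15
      - 2 * u 1 * u 2 * u 4 * u 16 + u 1 * u 2 * u 12 + 2 * u 1 * u 3 * u 5 + u 1 * u 4 * u 6
      - u 2 ^ 2 * u 3 * u 16 - 3 * u 2 ^ 2 * u 4 * u 17 + u 2 ^ 2 * u 13 + u 2 * u 3 * u 6
      + 2 * u 2 * u 4 * u 7,
    u 0 ^ 2 * u 9 + 2 * u 0 * u 1 * u 11 + u 0 * u 2 * u 12 + 3 * u 1 ^ 2 * u 14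
      + 2 * u 1 * u 2 * u 15 - 2 * u 1 * u 5 + u 2 ^ 2 * u 16 - u 2 * u 6,
    u 0 ^ 2 * u 10 + u 0 * u 1 * u 12 + 2 * u 0 * u 2 * u 13 + u 1 ^ 2 * u 15
      + 2 * u 1 * u 2 * u 16 - u 1 * u 6 + 3 * u 2 ^ 2 * u 17 - 2 * u 2 * u 7,
    -u 0 * u 3 ^ 2 * u 11 - u 0 * u 3 * u 4 * u 12 + 2 * u 0 * u 3 * u 9 - u 0 * u 4 ^ 2 * u 13
      + 2 * u 0 * u 4 * u 10 - 3 * u 0 * u 8 - 3 * u 1 * u 3 ^ 2 * u 14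
      - 2 * u 1 * u 3 * u 4 * u 15 + 2 * u 1 * u 3 * u 11 - u 1 * u 4 ^ 2 * u 16
      + u 1 * u 4 * u 12 - u 1 * u 9 - u 2 * u 3 ^ 2 * u 15 - 2 * u 2 * u 3 * u 4 * u 16
      + u 2 * u 3 * u 12 - 3 * u 2 * u 4 ^ 2 * u 17 + 2 * u 2 * u 4 * u 13 - u 2 * u 10
      + u 3 ^ 2 * u 5 + u 3 * u 4 * u 6 + u 4 ^ 2 * u 7,
    2 * u 0 * u 3 * u 11 + u 0 * u 4 * u 12 - 2 * u 0 * u 9 + 6 * u 1 * u 3 * u 14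
      + 2 * u 1 * u 4 * u 15 - 2 * u 1 * u 11 + 2 * u 2 * u 3 * u 15 + 2 * u 2 * u 4 * u 16
      - u 2 * u 12 - 2 * u 3 * u 5 - u 4 * u 6,
    u 0 * u 3 * u 12 + 2 * u 0 * u 4 * u 13 - 2 * u 0 * u 10 + 2 * u 1 * u 3 * u 15
      + 2 * u 1 * u 4 * u 16 - u 1 * u 12 + 2 * u 2 * u 3 * u 16 + 6 * u 2 * u 4 * u 17
      - 2 * u 2 * u 13 - u 3 * u 6 - 2 * u 4 * u 7,
    -u 0 * u 11 - 3 * u 1 * u 14 - u 2 * u 15 + u 5,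
    -u 0 * u 12 - 2 * u 1 * u 15 - 2 * u 2 * u 16 + u 6,
    -u 0 * u 13 - u 1 * u 16 - 3 * u 2 * u 17 + u 7,
    -u 3 ^ 3 * u 14 - u 3 ^ 2 * u 4 * u 15 + u 3 ^ 2 * u 11 - u 3 * u 4 ^ 2 * u 16
      + u 3 * u 4 * u 12 - u 3 * u 9 - u 4 ^ 3 * u 17 + u 4 ^ 2 * u 13 - u 4 * u 10 + u 8,
    3 * u 3 ^ 2 * u 14 + 2 * u 3 * u 4 * u 15 - 2 * u 3 * u 11 + u 4 ^ 2 * u 16 - u 4 * u 12 + u 9,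
    u 3 ^ 2 * u 15 + 2 * u 3 * u 4 * u 16 - u 3 * u 12 + 3 * u 4 ^ 2 * u 17 - 2 * u 4 * u 13
      + u 10,
    -3 * u 3 * u 14 - u 4 * u 15 + u 11,
    -2 * u 3 * u 15 - 2 * u 4 * u 16 + u 12,
    -u 3 * u 16 - 3 * u 4 * u 17 + u 13,
    u 14,
    u 15,
    u 16,
    u 17
  ]

/-- The coordinate change `x₁ ↦ y`, `x₂ ↦ z₂`, `x₃ ↦ z₃` of `cuspVec`. -/
def cuspT {K : Type*} [CommRing K] (u : Fin 18 → K) : Matrix (Fin 4) (Fin 4) K :=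
  !![1, 0, 0, 0; -u 0, 1, 0, 0; -u 1, -u 3, 1, 0; -u 2, -u 4, 0, 1]

theorem det_cuspT {K : Type*} [CommRing K] (u : Fin 18 → K) : (cuspT u).det = 1 := by
  rw [det_fin_four]
  simp [cuspT]

theorem cubicOf_eq_cuspCubic {K : Type*} [CommRing K] (q : Fin 3 → K) (c : Fin 10 → K) :
    cubicOf ![0, 0, 0, 0, 0, 0, 0, q 0, q 1, q 2, c 0, c 1, c 2, c 3, c 4, c 5, c 6, c 7, c 8, c 9]
      = cuspCubic q c := by
  simp only [cubicOf, monomial_cubicExp, Fin.sum_univ_succ, mon, cubicExp_apply, cuspCubic]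
  simp [expTab]
  ring

set_option maxHeartbeats 2000000 in
theorem cubicOf_cuspVec {K : Type*} [Field K] (u : Fin 18 → K) :
    cubicOf (cuspVec u) = linSub (cuspT u)
      (cuspCubic ![u 5, u 6, u 7]
        ![u 8, u 9, u 10, u 11, u 12, u 13, u 14, u 15, u 16, u 17]) := by
  simp only [cubicOf, monomial_cubicExp, Fin.sum_univ_succ, mon, cubicExp_apply, cuspCubic, linSub,
    cuspVec, cuspT]
  simp [expTab, C_ofNat]
  ring

/-- Each member of the family is a linear transform of a `cuspCubic`. -/
theorem rank_cuspVec {K : Type*} [Field K] (u : Fin 18 → K) : (nan (cuspVec u)).rank ≤ 18 := by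
  have h := cubicOf_cuspVec u
  rw [← cubicOf_eq_cuspCubic] at h
  exact (rank_nan_linSub_le (by simp [det_cuspT]) h).trans
    (rank_cuspCubic (cubicOf_eq_cuspCubic _ _))

/-- The base point of the parametrisation: the cubic `x₀x₂x₃ + x₁³`. -/
def cuspBase : Fin 18 → ℂ := ![0, 0, 0, 0, 0, 0, 1, 0, 1, 0, 0, 0, 0, 0, 0, 0, 0, 0]

/-- The coordinates used to show that the parametrisation is generically finite; at the base point
the `i`-th one depends, to first order, on the `i`-th parameter only. -/
def cuspCoord : Fin 18 → Fin 20 :=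
  ![4, 3, 2, 6, 5, 7, 8, 9, 10, 11, 12, 13, 14, 15, 16, 17, 18, 19]

set_option maxHeartbeats 2000000 in
theorem jacobian_cuspVec (i j : Fin 18) :
    eval cuspBase (pderiv j (cuspVec (X : Fin 18 → MvPolynomial (Fin 18) ℂ) (cuspCoord i)))
      = Matrix.diagonal ![-3, -1, -1, -1, -1, 1, 1, 1, 1, 1, 1, 1, 1, 1, 1, 1, 1, 1] i j := by
  have hX : ∀ k : Fin 18, eval cuspBase (pderiv j (X k)) = if k = j then 1 else 0 := fun k => by
    rw [pderiv_X]
    by_cases h : k = j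
    · subst h
      simp
    · simp [h]
  fin_cases i <;> simp [cuspVec, cuspCoord, hX, -pderiv_X, Matrix.diagonal_apply] <;>
    simp [cuspBase] <;> split_ifs <;> simp

theorem trGe_cuspVec : TrGe (cuspVec (X : Fin 18 → MvPolynomial (Fin 18) ℂ)) 18 := by
  refine ⟨cuspCoord, algebraicIndependent_of_jacobian _ fun h0 => ?_⟩
  have h1 := congrArg (eval cuspBase) h0
  rw [RingHom.map_det, map_zero] at h1
  have h2 : (eval cuspBase).mapMatrix (Matrix.of fun i j => pderiv j
      ((cuspVec (X : Fin 18 → MvPolynomial (Fin 18) ℂ) ∘ cuspCoord) i))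
      = Matrix.diagonal ![-3, -1, -1, -1, -1, 1, 1, 1, 1, 1, 1, 1, 1, 1, 1, 1, 1, 1] := by
    ext i j
    exact jacobian_cuspVec i j
  rw [h2, Matrix.det_diagonal] at h1
  simp [Fin.prod_univ_succ] at h1

set_option maxHeartbeats 1000000 in
theorem map_cuspVec {K L : Type*} [CommRing K] [CommRing L] (f : K →+* L) (u : Fin 18 → K)
    (m : Fin 20) : cuspVec (fun i => f (u i)) m = f (cuspVec u m) := by
  fin_cases m <;> simp [cuspVec, map_ofNat f]

theorem le_ringKrullDim_two :
    18 ≤ ringKrullDim (MvPolynomial (Fin 20) ℂ ⧸ nansonMinorsIdeal 2) := by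
  let A := MvPolynomial (Fin 18) ℂ
  let ι : A →ₐ[ℂ] FractionRing A := IsScalarTower.toAlgHom ℂ A (FractionRing A)
  have hι : Function.Injective ι := IsFractionRing.injective A (FractionRing A)
  have hI : ∀ p ∈ nansonMinorsIdeal 2, aeval (cuspVec fun i => ι (X i)) p = 0 :=
    (minors_vanish_iff _ 2).mpr (by have := rank_cuspVec fun i => ι (X i : A); omega)
  refine le_ringKrullDim_quotient_of_point (r := 18) _ (cuspVec fun i => ι (X i)) hI ?_
  have : (cuspVec fun i => ι (X i)) = fun m => ι (cuspVec (X : Fin 18 → A) m) := by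
    funext m
    exact map_cuspVec (ι : A →+* FractionRing A) X m
  rw [this]
  exact trGe_cuspVec.map ι hι

/-- The stratum `V₂` cut out by the 19 × 19 minors of Nanson's matrix has codimension
exactly 2 in ℙ¹⁹ (its affine cone has Krull dimension 18), and the strata `Vₖ` for
`k ≥ 3` have codimension at least 3 (affine cones of Krull dimension at most 17). -/
theorem codim_V2_eq_two_and_codim_Vk_ge_three :
    ringKrullDim (MvPolynomial (Fin 20) ℂ ⧸ nansonMinorsIdeal 2) = 18 ∧
      ∀ k : ℕ, 3 ≤ k →
        ringKrullDim (MvPolynomial (Fin 20) ℂ ⧸ nansonMinorsIdeal k) ≤ 17 := by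
  exact ⟨le_antisymm ringKrullDim_two_le le_ringKrullDim_two,
    fun _ hk => ringKrullDim_le_of_three_le hk⟩
end

section
/- Let F ∈ ℂ[x_0, x_1, x_2, x_3] be a nonzero homogeneous form of degree 3 such that every singular point of the projective surface V(F) ⊂ P^3(ℂ) is an ordinary node, i.e. at every nonzero p ∈ ℂ^4 with ∇F(p) = 0 the 4×4 Hessian matrix (∂^2F/∂x_i∂x_j)(p) has rank 3. Then V(F) has at most 4 singular points. In particular, the locus N_k of k-nodal cubic surfaces is empty for k > 4. -/
open MvPolynomial

/-!
Write `T` for the polarisation of `F`, the symmetric trilinear form with coefficients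
`∂ᵢ∂ⱼ∂ₖF`. By Euler's relation `T p q` is the Hessian at `p` applied to `q`, and `T p p = 2 ∇F(p)`.
So `p` is singular iff `T p p = 0`, and the node condition says that `T p q = 0` forces `q` to be
a multiple of `p`. The bound is then linear algebra on a four-dimensional space: distinct singular
points are in linearly general position, and five such points cannot exist.

* Three singular points are not collinear (`triple`): if `r = a p + b q`, then
  `0 = T r r = 2ab T p q`, while `T p q ≠ 0`.
* Four are not coplanar (`quad`): if `s = a p + b q + c r`, then `T s s p = 0` gives `T p q r = 0`.
  Hence `T p q` and `T p r` both annihilate the plane of `p, q, r`, so they are proportional, and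
  the kernel of `T p` is too big.
* Five are impossible (`five`): four of them form a basis `p, q, r, s`, and the fifth is
  `t = a p + b q + c r + d s` with nonzero coefficients. Evaluating `T t t = 0` on the basis gives
  a linear system that kills the four products `T p q r`, ..., so `T p q = 0`.
-/

/-! ### Singular points of a symmetric trilinear form -/

section LinearAlgebra

variable {V : Type*} [AddCommGroup V] [Module ℂ V]

/-- A nonzero vector `p` that is a singular zero of the cubic form `T x x x`. -/
def SingVec (T : V →ₗ[ℂ] V →ₗ[ℂ] V →ₗ[ℂ] ℂ) (p : V) : Prop := p ≠ 0 ∧ T p p = 0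

/-- `T` is symmetric, and all singular points of the cubic form `T x x x` are ordinary nodes:
the kernel of `T p` is spanned by `p`. -/
structure NodalForm (T : V →ₗ[ℂ] V →ₗ[ℂ] V →ₗ[ℂ] ℂ) : Prop where
  symm₁ : ∀ x y z, T x y z = T y x z
  symm₂ : ∀ x y z, T x y z = T x z y
  node : ∀ p, SingVec T p → ∀ q, T p q = 0 → ∃ c : ℂ, q = c • p

variable {T : V →ₗ[ℂ] V →ₗ[ℂ] V →ₗ[ℂ] ℂ}

theorem NodalForm.comm (h : NodalForm T) (x y : V) : T x y = T y x :=
  LinearMap.ext fun z => h.symm₁ x y z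

theorem SingVec.mid (h : NodalForm T) {p : V} (hp : SingVec T p) (q : V) : T p q p = 0 := by
  rw [h.symm₂, hp.2]; rfl

theorem SingVec.right (h : NodalForm T) {p : V} (hp : SingVec T p) (q : V) : T q p p = 0 := by
  rw [h.symm₁, hp.mid h]

theorem triple (h : NodalForm T) {p q r : V} (hp : SingVec T p) (hq : SingVec T q)
    (hr : SingVec T r) (hpq : ∀ c : ℂ, q ≠ c • p) (hpr : ∀ c : ℂ, r ≠ c • p)
    (hqr : ∀ c : ℂ, r ≠ c • q) (a b : ℂ) : r ≠ a • p + b • q := by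
  intro e
  have h1 : (2 * a * b) • T p q = 0 := by
    have := hr.2
    rw [e] at this
    simp only [map_add, map_smul, LinearMap.add_apply, LinearMap.smul_apply, hp.2, hq.2,
      h.comm q p] at this
    rw [← this]
    module
  rcases smul_eq_zero.1 h1 with h2 | h2
  · have : a = 0 ∨ b = 0 := by simpa using h2
    rcases this with rfl | rfl
    · exact hqr b (by simpa using e)
    · exact hpr a (by simpa using e)
  · obtain ⟨c, hc⟩ := h.node p hp q h2
    exact hpq c hc

theorem quad (h : NodalForm T) (hV : Module.finrank ℂ V = 4) {p q r s : V}
    (hp : SingVec T p) (hq : SingVec T q)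
    (hr : SingVec T r) (hs : SingVec T s)
    (hpq : ∀ c : ℂ, q ≠ c • p) (hpr : ∀ c : ℂ, r ≠ c • p) (hps : ∀ c : ℂ, s ≠ c • p)
    (hqr : ∀ c : ℂ, r ≠ c • q) (hqs : ∀ c : ℂ, s ≠ c • q) (hrs : ∀ c : ℂ, s ≠ c • r)
    (a b c : ℂ) : s ≠ a • p + b • q + c • r := by
  intro e
  have hb : b ≠ 0 := by
    rintro rfl
    exact triple h hp hr hs hpr hps hrs a c (by simpa using e)
  have hc : c ≠ 0 := by
    rintro rfl
    exact triple h hp hq hs hpq hps hqs a b (by simpa using e)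
  have hT : T p q r = 0 := by
    have h1 : T s s p = 0 := by rw [hs.2]; rfl
    rw [e] at h1
    simp only [map_add, map_smul, LinearMap.add_apply, LinearMap.smul_apply, hp.2, hq.2, hr.2,
      hp.mid h, hp.right h, LinearMap.zero_apply, smul_eq_mul] at h1
    have h2 : T q r p = T p q r := by rw [h.symm₂, h.symm₁]
    have h3 : T r q p = T p q r := by rw [h.symm₁, h2]
    rw [h2, h3] at h1
    have : (2 * b * c) * T p q r = 0 := by linear_combination h1
    simpa [hb, hc] using this
  have : FiniteDimensional ℂ V := Module.finite_of_finrank_eq_succ hV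
  have hli : LinearIndependent ℂ ![r, p, q] := by
    refine linearIndependent_finCons.2 ⟨?_, ?_⟩
    · exact (LinearIndependent.pair_iff' hp.1).2 fun c hc => hpq c hc.symm
    · simp only [Matrix.range_cons, Matrix.range_empty, Set.union_empty, Set.singleton_union,
        Submodule.mem_span_pair, not_exists]
      intro a b e
      exact triple h hp hq hr hpq hpr hqr a b e.symm
  set W := Submodule.span ℂ (Set.range ![r, p, q]) with hW
  have hW3 : Module.finrank ℂ W = 3 := by
    simpa using finrank_span_eq_card hli
  have hW1 : Module.finrank ℂ W.dualAnnihilator = 1 := by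
    have := Subspace.finrank_add_finrank_dualAnnihilator_eq W
    omega
  have mem : ∀ f : V →ₗ[ℂ] ℂ, f p = 0 → f q = 0 → f r = 0 → f ∈ W.dualAnnihilator := by
    intro f h1 h2 h3
    rw [Submodule.mem_dualAnnihilator]
    intro w hw
    have : W ≤ LinearMap.ker f := by
      rw [hW, Submodule.span_le]
      rintro _ ⟨i, rfl⟩
      fin_cases i <;> simp [h1, h2, h3]
    exact this hw
  have m1 : T p q ∈ W.dualAnnihilator := mem _ (hp.mid h q) (hq.right h p) hT
  have m2 : T p r ∈ W.dualAnnihilator :=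
    mem _ (hp.mid h r) (by rw [h.symm₂, hT]) (hr.right h p)
  have m1' : (⟨T p q, m1⟩ : W.dualAnnihilator) ≠ 0 := by
    intro h0
    obtain ⟨c, hc⟩ := h.node p hp q (congrArg Subtype.val h0)
    exact hpq c hc
  obtain ⟨k, hk⟩ := (finrank_eq_one_iff_of_nonzero' _ m1').1 hW1 ⟨T p r, m2⟩
  have hk' : k • T p q = T p r := congrArg Subtype.val hk
  obtain ⟨l, hl⟩ := h.node p hp (r - k • q) (by rw [map_sub, map_smul, hk', sub_self])
  exact triple h hp hq hr hpq hpr hqr l k (by rw [← hl]; abel)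

theorem five (h : NodalForm T) (hV : Module.finrank ℂ V = 4) (v : Fin 5 → V)
    (hv : ∀ i, SingVec T (v i)) (hne : ∀ i j, i ≠ j → ∀ c : ℂ, v j ≠ c • v i) : False := by
  have hq : ∀ i j k l : Fin 5, i ≠ j → i ≠ k → i ≠ l → j ≠ k → j ≠ l → k ≠ l →
      ∀ a b c : ℂ, v l ≠ a • v i + b • v j + c • v k := fun i j k l h1 h2 h3 h4 h5 h6 =>
    quad h hV (hv i) (hv j) (hv k) (hv l) (hne _ _ h1) (hne _ _ h2) (hne _ _ h3) (hne _ _ h4)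
      (hne _ _ h5) (hne _ _ h6)
  have : FiniteDimensional ℂ V := Module.finite_of_finrank_eq_succ hV
  have hli : LinearIndependent ℂ ![v 3, v 2, v 0, v 1] := by
    refine linearIndependent_finCons.2 ⟨linearIndependent_finCons.2 ⟨?_, ?_⟩, ?_⟩
    · exact (LinearIndependent.pair_iff' (hv 0).1).2 fun c hc => hne 0 1 (by decide) c hc.symm
    · simp only [Matrix.range_cons, Matrix.range_empty, Set.union_empty, Set.singleton_union,
        Submodule.mem_span_pair, not_exists]
      intro a b e
      exact triple h (hv 0) (hv 1) (hv 2) (hne _ _ (by decide)) (hne _ _ (by decide))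
        (hne _ _ (by decide)) a b e.symm
    · simp only [Matrix.range_cons, Matrix.range_empty, Set.union_empty, Set.singleton_union,
        Submodule.mem_span_triple, not_exists]
      intro a b c e
      exact hq 2 0 1 3 (by decide) (by decide) (by decide) (by decide) (by decide) (by decide)
        a b c e.symm
  have htop : Submodule.span ℂ (Set.range ![v 3, v 2, v 0, v 1]) = ⊤ :=
    hli.span_eq_top_of_card_eq_finrank (by simp [hV])
  obtain ⟨w, hw⟩ := (Submodule.mem_span_range_iff_exists_fun ℂ).1
    (htop ▸ Submodule.mem_top : v 4 ∈ Submodule.span ℂ (Set.range ![v 3, v 2, v 0, v 1]))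
  obtain ⟨a, b, c, d, e⟩ : ∃ a b c d : ℂ, v 4 = a • v 0 + b • v 1 + c • v 2 + d • v 3 := by
    refine ⟨w 2, w 3, w 1, w 0, ?_⟩
    rw [← hw, Fin.sum_univ_four]
    simp
    abel
  have ha : a ≠ 0 := by
    rintro rfl
    exact hq 1 2 3 4 (by decide) (by decide) (by decide) (by decide) (by decide) (by decide)
      b c d (by simpa using e)
  have hb : b ≠ 0 := by
    rintro rfl
    exact hq 0 2 3 4 (by decide) (by decide) (by decide) (by decide) (by decide) (by decide)
      a c d (by simpa using e)
  have hc : c ≠ 0 := by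
    rintro rfl
    exact hq 0 1 3 4 (by decide) (by decide) (by decide) (by decide) (by decide) (by decide)
      a b d (by simpa using e)
  have hd : d ≠ 0 := by
    rintro rfl
    exact hq 0 1 2 4 (by decide) (by decide) (by decide) (by decide) (by decide) (by decide)
      a b c (by simpa using e)
  -- Half of the expansion of `T (v 4) (v 4) z = 0`; the squares drop out as `T (v i) (v i) = 0`.
  have key : ∀ z : V, a * b * T (v 0) (v 1) z + a * c * T (v 0) (v 2) z + a * d * T (v 0) (v 3) z
      + b * c * T (v 1) (v 2) z + b * d * T (v 1) (v 3) z + c * d * T (v 2) (v 3) z = 0 := by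
    intro z
    have h1 : T (v 4) (v 4) z = 0 := by rw [(hv 4).2]; rfl
    rw [e] at h1
    simp only [map_add, map_smul, LinearMap.add_apply, LinearMap.smul_apply, (hv _).2,
      LinearMap.zero_apply, smul_eq_mul, h.symm₁ (v 1) (v 0), h.symm₁ (v 2) (v 0),
      h.symm₁ (v 3) (v 0), h.symm₁ (v 2) (v 1), h.symm₁ (v 3) (v 1), h.symm₁ (v 3) (v 2)] at h1
    linear_combination h1 / 2
  have k0 := key (v 0)
  have k1 := key (v 1)
  have k2 := key (v 2)
  have k3 := key (v 3)
  have cyc : ∀ x y z, T x y z = T z x y := fun x y z => by rw [h.symm₂, h.symm₁]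
  simp only [(hv _).mid h, (hv _).right h, cyc (v 1) (v 2) (v 0), cyc (v 1) (v 3) (v 0),
    cyc (v 2) (v 3) (v 0), cyc (v 2) (v 3) (v 1), h.symm₂ (v 0) (v 2) (v 1),
    h.symm₂ (v 0) (v 3) (v 1), h.symm₂ (v 0) (v 3) (v 2), h.symm₂ (v 1) (v 3) (v 2)] at k0 k1 k2 k3
  -- With `X = abc T₀₁₂`, `Y = abd T₀₁₃`, `Z = acd T₀₂₃`, `W = bcd T₁₂₃`, the relations multiplied
  -- by `a, b, c, d` say that every three of `X, Y, Z, W` add up to zero.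
  have e1 : (a * b * c) * T (v 0) (v 1) (v 2) = 0 := by
    linear_combination (a * k0 + b * k1 + c * k2 - 2 * d * k3) / 3
  have e2 : (a * b * d) * T (v 0) (v 1) (v 3) = 0 := by
    linear_combination (a * k0 + b * k1 + d * k3 - 2 * c * k2) / 3
  have t1 : T (v 0) (v 1) (v 2) = 0 := by simpa [ha, hb, hc] using e1
  have t2 : T (v 0) (v 1) (v 3) = 0 := by simpa [ha, hb, hd] using e2
  have hT : T (v 0) (v 1) = 0 := by
    refine LinearMap.ext_on htop ?_
    rintro _ ⟨i, rfl⟩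
    fin_cases i <;> simp [t1, t2, (hv _).mid h, (hv _).right h]
  obtain ⟨k, hk⟩ := h.node _ (hv 0) _ hT
  exact hne 0 1 (by decide) k hk

end LinearAlgebra

/-! ### Polarisation of a cubic form -/

/-- The polarisation of a cubic form `F`, with coefficients the (constant) third partial
derivatives of `F`, read off at the origin. -/
noncomputable def polar (F : MvPolynomial (Fin 4) ℂ) :
    (Fin 4 → ℂ) →ₗ[ℂ] (Fin 4 → ℂ) →ₗ[ℂ] (Fin 4 → ℂ) →ₗ[ℂ] ℂ :=
  ∑ i, ∑ j, ∑ k, (LinearMap.proj i).smulRight ((LinearMap.proj j).smulRight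
    (eval 0 (pderiv i (pderiv j (pderiv k F))) • LinearMap.proj k))

theorem polar_apply (F : MvPolynomial (Fin 4) ℂ) (x y z : Fin 4 → ℂ) :
    polar F x y z =
      ∑ i, ∑ j, ∑ k, x i * (y j * (eval 0 (pderiv i (pderiv j (pderiv k F))) * z k)) := by
  simp [polar, LinearMap.sum_apply]

theorem euler_eval {G : MvPolynomial (Fin 4) ℂ} {n : ℕ} (hG : G.IsHomogeneous n)
    (x : Fin 4 → ℂ) : ∑ i, x i * eval x (pderiv i G) = n * eval x G := by
  have := congrArg (eval x) hG.sum_X_mul_pderiv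
  simpa using this

theorem pderiv_comm' (F : MvPolynomial (Fin 4) ℂ) (i j : Fin 4) :
    pderiv i (pderiv j F) = pderiv j (pderiv i F) := by
  -- The commutator of two derivations is a derivation, and this one kills the variables.
  have h : ⁅pderiv (R := ℂ) i, pderiv (R := ℂ) j⁆ = 0 := by
    refine derivation_ext fun k => ?_
    simp [Derivation.commutator_apply, pderiv_X, Pi.single_apply, apply_ite]
  have := congrArg (fun D => D F) h
  simpa [Derivation.commutator_apply, sub_eq_zero] using this

theorem eval_const {G : MvPolynomial (Fin 4) ℂ} (hG : G.IsHomogeneous 0) (x : Fin 4 → ℂ) :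
    eval x G = eval 0 G := by
  rw [totalDegree_eq_zero_iff_eq_C.1 (Nat.le_zero.1 hG.totalDegree_le)]
  simp

/-- `polar F x y z` is the Hessian at `x` paired with `y` and `z`. -/
theorem polar_hess {F : MvPolynomial (Fin 4) ℂ} (hF : F.IsHomogeneous 3) (x y z : Fin 4 → ℂ) :
    polar F x y z = ∑ j, ∑ k, y j * z k * eval x (pderiv j (pderiv k F)) := by
  rw [polar_apply, Finset.sum_comm]
  refine Finset.sum_congr rfl fun j _ => ?_
  rw [Finset.sum_comm]
  refine Finset.sum_congr rfl fun k _ => ?_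
  have h1 : (pderiv j (pderiv k F)).IsHomogeneous 1 := (hF.pderiv (i := k)).pderiv (i := j)
  have := euler_eval h1 x
  rw [Nat.cast_one, one_mul] at this
  rw [← this, Finset.mul_sum]
  refine Finset.sum_congr rfl fun i _ => ?_
  rw [eval_const (h1.pderiv (i := i)) x]
  ring

theorem polar_grad {F : MvPolynomial (Fin 4) ℂ} (hF : F.IsHomogeneous 3) (x z : Fin 4 → ℂ) :
    polar F x x z = 2 * ∑ k, z k * eval x (pderiv k F) := by
  rw [polar_hess hF, Finset.sum_comm, Finset.mul_sum]
  refine Finset.sum_congr rfl fun k _ => ?_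
  have h1 : (pderiv k F).IsHomogeneous 2 := hF.pderiv (i := k)
  have := euler_eval h1 x
  push_cast at this
  rw [mul_left_comm, ← this, Finset.mul_sum]
  refine Finset.sum_congr rfl fun i _ => ?_
  ring

theorem polar_sing {F : MvPolynomial (Fin 4) ℂ} (hF : F.IsHomogeneous 3) (p : Fin 4 → ℂ) :
    polar F p p = 0 ↔ ∀ i, eval p (pderiv i F) = 0 := by
  constructor
  · intro h i
    have := polar_grad hF p (Pi.single i 1)
    rw [h] at this
    simpa [Pi.single_apply] using this
  · intro h
    ext z
    simp [polar_grad hF, h]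

theorem nodalForm_polar {F : MvPolynomial (Fin 4) ℂ} (hF : F.IsHomogeneous 3)
    (hnode : ∀ p : Fin 4 → ℂ, p ≠ 0 → (∀ i, eval p (pderiv i F) = 0) →
      (Matrix.of fun i j : Fin 4 => eval p (pderiv i (pderiv j F))).rank = 3) :
    NodalForm (polar F) := by
  have s2 : ∀ x y z, polar F x y z = polar F x z y := by
    intro x y z
    rw [polar_hess hF, polar_hess hF, Finset.sum_comm]
    refine Finset.sum_congr rfl fun j _ => Finset.sum_congr rfl fun k _ => ?_
    rw [pderiv_comm' F k j]
    ring
  refine ⟨?_, s2, ?_⟩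
  · intro x y z
    rw [polar_apply, polar_apply, Finset.sum_comm]
    refine Finset.sum_congr rfl fun j _ => Finset.sum_congr rfl fun i _ =>
      Finset.sum_congr rfl fun k _ => ?_
    rw [pderiv_comm' _ i j]
    ring
  · rintro p ⟨hp0, hp⟩ q hq
    set M := Matrix.of fun i j : Fin 4 => eval p (pderiv i (pderiv j F)) with hM
    have hr : M.rank = 3 := hnode p hp0 ((polar_sing hF p).1 hp)
    have mem : ∀ q, polar F p q = 0 → q ∈ LinearMap.ker M.mulVecLin := by
      intro q hq
      rw [LinearMap.mem_ker]
      ext i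
      have h1 : polar F p (Pi.single i 1) q = 0 := by rw [s2, hq]; rfl
      rw [polar_hess hF] at h1
      simp only [Pi.single_apply] at h1
      simp only [hM, Matrix.mulVecLin_apply, Matrix.mulVec, dotProduct, Matrix.of_apply,
        Pi.zero_apply]
      rw [Finset.sum_eq_single i (fun b _ hb => by simp [hb]) (by simp)] at h1
      rw [← h1]
      refine Finset.sum_congr rfl fun k _ => ?_
      simp [mul_comm]
    have hk : Module.finrank ℂ (LinearMap.ker M.mulVecLin) = 1 := by
      have := LinearMap.finrank_range_add_finrank_ker M.mulVecLin
      rw [← Matrix.rank, hr, Module.finrank_fin_fun] at this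
      omega
    have hne : (⟨p, mem p hp⟩ : LinearMap.ker M.mulVecLin) ≠ 0 := fun h =>
      hp0 (congrArg Subtype.val h)
    obtain ⟨c, hc⟩ := (finrank_eq_one_iff_of_nonzero' _ hne).1 hk ⟨q, mem q hq⟩
    exact ⟨c, (congrArg Subtype.val hc).symm⟩

/-- A nonzero quaternary cubic form over ℂ all of whose singular points are ordinary
nodes (the 4 × 4 Hessian has rank 3 at every nontrivial common zero of the partial
derivatives) defines a cubic surface with at most 4 singular points in `ℙ³(ℂ)`.
In particular, the locus `N_k` of `k`-nodal cubic surfaces is empty for `k > 4`. -/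
theorem nodal_cubic_surface_has_at_most_four_singular_points
    (F : MvPolynomial (Fin 4) ℂ) (hF0 : F ≠ 0) (hF : F.IsHomogeneous 3)
    (hnode : ∀ p : Fin 4 → ℂ, p ≠ 0 → (∀ i, eval p (pderiv i F) = 0) →
      (Matrix.of fun i j : Fin 4 => eval p (pderiv i (pderiv j F))).rank = 3) :
    {x : Projectivization ℂ (Fin 4 → ℂ) |
      ∀ i, eval x.rep (pderiv i F) = 0}.Finite ∧
    {x : Projectivization ℂ (Fin 4 → ℂ) |
      ∀ i, eval x.rep (pderiv i F) = 0}.ncard ≤ 4 := by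
  set S := {x : Projectivization ℂ (Fin 4 → ℂ) | ∀ i, eval x.rep (pderiv i F) = 0} with hS
  rw [← Set.encard_le_coe_iff_finite_ncard_le]
  by_contra hlt
  have h5 : ((5 : ℕ) : ℕ∞) ≤ S.encard := by
    have := Order.add_one_le_of_lt (not_le.1 hlt)
    exact_mod_cast this
  obtain ⟨t, htS, ht⟩ := Set.exists_subset_encard_eq h5
  have hfin : t.Finite := Set.finite_of_encard_eq_coe ht
  have hcard : Nat.card t = 5 := by
    rw [Nat.card_coe_set_eq, Set.ncard, ht]; rfl
  have : Finite t := hfin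
  let f := (Finite.equivFinOfCardEq hcard).symm
  refine five (nodalForm_polar hF hnode) (Module.finrank_fin_fun ℂ)
    (fun i => (f i : Projectivization ℂ (Fin 4 → ℂ)).rep) ?_ ?_
  · exact fun i => ⟨Projectivization.rep_nonzero _, (polar_sing hF _).2 (htS (f i).2)⟩
  · intro i j hij c hc
    apply hij
    apply f.injective
    apply Subtype.ext
    rw [← Projectivization.mk_rep (f i : Projectivization ℂ (Fin 4 → ℂ)),
      ← Projectivization.mk_rep (f j : Projectivization ℂ (Fin 4 → ℂ)), eq_comm,
      Projectivization.mk_eq_mk_iff']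
    exact ⟨c, hc.symm⟩
end
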